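/- arXiv:2306.04230 — 3 statements merged into one kernel-verified Lean document; each statement's English description precedes it below -/
import Mathlib

section
/- Let ψ = Σ_{i=1}^M (f_i + h_i) and Ω = {x̂ ∈ S : ψ(x̂) = min_{x∈S} ψ(x)}, assumed nonempty. For each i ∈ I, every weak sequential cluster point of the sequence {w_n^{(i)}} generated by Algorithm 1 belongs to Ω. -/
open Filter Topology

/-- variational inequality for the prox -/
lemma prox_ineq {H : Type*} [NormedAddCommGroup H] [InnerProductSpace ℝ H]
    (f : H → ℝ) (hf : ConvexOn ℝ Set.univ f) (lam : ℝ) (hl : 0 < lam) (V y : H)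
    (hy : ∀ v : H, f y + (1 / (2 * lam)) * ‖V - y‖ ^ 2 ≤ f v + (1 / (2 * lam)) * ‖V - v‖ ^ 2)
    (v : H) : @inner ℝ H _ (V - y) (v - y) ≤ lam * (f v - f y) := by
  have key : ∀ t : ℝ, 0 < t → t ≤ 1 →
      @inner ℝ H _ (V - y) (v - y) ≤ lam * (f v - f y) + t * (‖v - y‖ ^ 2 / 2) := by
    intro t ht ht1
    have h1 := hy (y + t • (v - y))
    have h2 : f (y + t • (v - y)) ≤ (1 - t) * f y + t * f v := by
      have := hf.2 (Set.mem_univ y) (Set.mem_univ v) (by linarith : 0 ≤ 1 - t) ht.le (by ring)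
      simp only [smul_eq_mul] at this
      have e : (1 - t) • y + t • v = y + t • (v - y) := by module
      rwa [e] at this
    have h3 : ‖V - (y + t • (v - y))‖ ^ 2 = ‖V - y‖ ^ 2 - 2 * t * @inner ℝ H _ (V - y) (v - y)
        + t ^ 2 * ‖v - y‖ ^ 2 := by
      have : V - (y + t • (v - y)) = (V - y) - t • (v - y) := by abel
      rw [this, norm_sub_sq_real, inner_smul_right, norm_smul, mul_pow, Real.norm_eq_abs, sq_abs]
      ring
    rw [h3] at h1
    have h4 : 0 ≤ t * (f v - f y) + (1 / (2 * lam)) * (- 2 * t * @inner ℝ H _ (V - y) (v - y)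
        + t ^ 2 * ‖v - y‖ ^ 2) := by nlinarith
    have h5 : 0 ≤ (2 * lam) * (t * (f v - f y) + (1 / (2 * lam)) * (- 2 * t * @inner ℝ H _ (V - y) (v - y)
        + t ^ 2 * ‖v - y‖ ^ 2)) := by positivity
    have h6 : (2 * lam) * (t * (f v - f y) + (1 / (2 * lam)) * (- 2 * t * @inner ℝ H _ (V - y) (v - y)
        + t ^ 2 * ‖v - y‖ ^ 2)) = (2 * t) * (lam * (f v - f y) + t * (‖v - y‖ ^ 2 / 2) -
          @inner ℝ H _ (V - y) (v - y)) := by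
      field_simp
      ring
    rw [h6] at h5
    have := nonneg_of_mul_nonneg_right h5 (by positivity)
    linarith
  refine le_of_forall_pos_le_add fun ε hε => ?_
  set t := min 1 (ε / (‖v - y‖ ^ 2 / 2 + 1)) with ht
  have hpos : 0 < ‖v - y‖ ^ 2 / 2 + 1 := by positivity
  have ht0 : 0 < t := lt_min one_pos (by positivity)
  have h1 := key t ht0 (min_le_left _ _)
  have h2 : t * (‖v - y‖ ^ 2 / 2 + 1) ≤ ε := by
    have : t ≤ ε / (‖v - y‖ ^ 2 / 2 + 1) := min_le_right _ _
    rwa [le_div_iff₀ hpos] at this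
  nlinarith

lemma prox_compare {H : Type*} [NormedAddCommGroup H] [InnerProductSpace ℝ H]
    (f : H → ℝ) (l l' : ℝ) (hl : 0 < l) (hl' : 0 < l') (V V' y y' : H)
    (h1 : ∀ v, @inner ℝ H _ (V - y) (v - y) ≤ l * (f v - f y))
    (h2 : ∀ v, @inner ℝ H _ (V' - y') (v - y') ≤ l' * (f v - f y')) :
    ‖y - y'‖ ≤ ‖V - V'‖ + |1 - l / l'| * ‖V' - y'‖ := by
  have a1 := h1 y'
  have a2 := mul_le_mul_of_nonneg_left (h2 y) (div_pos hl hl').le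
  have e : l / l' * (l' * (f y - f y')) = l * (f y - f y') := by field_simp
  rw [e] at a2
  have hV : V - y = ((V - V') + (1 - l / l') • (V' - y')) + (l / l') • (V' - y') - (y - y') := by module
  have hk : ‖y - y'‖ ^ 2 ≤ @inner ℝ H _ ((V - V') + (1 - l / l') • (V' - y')) (y - y') := by
    have e2 : y' - y = - (y - y') := by abel
    rw [e2, inner_neg_right, hV, inner_sub_left, inner_add_left, real_inner_self_eq_norm_sq,
      real_inner_smul_left] at a1
    linarith
  have h3 := hk.trans (real_inner_le_norm _ _)
  have h4 : ‖y - y'‖ ≤ ‖(V - V') + (1 - l / l') • (V' - y')‖ := by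
    by_contra hc
    push Not at hc
    nlinarith [norm_nonneg ((V - V') + (1 - l / l') • (V' - y'))]
  refine h4.trans ((norm_add_le _ _).trans ?_)
  rw [norm_smul, Real.norm_eq_abs]

lemma firm_nonexp {H : Type*} [NormedAddCommGroup H] [InnerProductSpace ℝ H] (T : H → H)
    (hT : ∀ x y : H, ‖T x - T y‖ ^ 2 ≤ @inner ℝ H _ (T x - T y) (x - y)) (x y : H) :
    ‖T x - T y‖ ≤ ‖x - y‖ := by
  have h3 := (hT x y).trans (real_inner_le_norm _ _)
  by_contra hc
  push Not at hc
  nlinarith [norm_nonneg (x - y)]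

lemma firm_fix {H : Type*} [NormedAddCommGroup H] [InnerProductSpace ℝ H] (T : H → H)
    (hT : ∀ x y : H, ‖T x - T y‖ ^ 2 ≤ @inner ℝ H _ (T x - T y) (x - y)) (y v : H) (hv : T v = v) :
    ‖T y - v‖ ^ 2 + ‖y - T y‖ ^ 2 ≤ ‖y - v‖ ^ 2 := by
  have h := hT y v
  rw [hv] at h
  have e : y - T y = (y - v) - (T y - v) := by abel
  have h2 := norm_sub_sq_real (y - v) (T y - v)
  rw [real_inner_comm] at h2
  rw [e, h2]
  linarith

lemma demiclosed {H : Type*} [NormedAddCommGroup H] [InnerProductSpace ℝ H] (T : H → H)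
    (hT : ∀ x y : H, ‖T x - T y‖ ≤ ‖x - y‖) (y : ℕ → H) (p : H) (C : ℝ)
    (hC : ∀ᶠ n in atTop, ‖y n‖ ≤ C)
    (hw : ∀ q : H, Tendsto (fun k => @inner ℝ H _ (y k) q) atTop (𝓝 (@inner ℝ H _ p q)))
    (hy : Tendsto (fun k => ‖y k - T (y k)‖) atTop (𝓝 0)) : T p = p := by
  have h1 : ∀ᶠ n in atTop, ‖p - T p‖ ^ 2 ≤ -2 * (@inner ℝ H _ (y n) (p - T p) - @inner ℝ H _ p (p - T p))
      + (‖y n - T (y n)‖ * ‖y n - T (y n)‖ + 2 * ‖y n - T (y n)‖ * (C + ‖p‖)) := by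
    filter_upwards [hC] with n hn
    have a : ‖y n - T p‖ ≤ ‖y n - T (y n)‖ + ‖y n - p‖ := by
      have : y n - T p = (y n - T (y n)) + (T (y n) - T p) := by abel
      rw [this]
      exact (norm_add_le _ _).trans (by linarith [hT (y n) p])
    have b : ‖y n - T p‖ ^ 2 = ‖y n - p‖ ^ 2 + 2 * @inner ℝ H _ (y n - p) (p - T p) + ‖p - T p‖ ^ 2 := by
      have : y n - T p = (y n - p) + (p - T p) := by abel
      rw [this, norm_add_sq_real]
    have c : ‖y n - T p‖ ^ 2 ≤ (‖y n - T (y n)‖ + ‖y n - p‖) ^ 2 := by gcongr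
    have d : ‖y n - p‖ ≤ C + ‖p‖ := (norm_sub_le _ _).trans (by linarith)
    have e := mul_le_mul_of_nonneg_left d (norm_nonneg (y n - T (y n)))
    rw [inner_sub_left] at b
    nlinarith
  have h2 : Tendsto (fun n => -2 * (@inner ℝ H _ (y n) (p - T p) - @inner ℝ H _ p (p - T p))
      + (‖y n - T (y n)‖ * ‖y n - T (y n)‖ + 2 * ‖y n - T (y n)‖ * (C + ‖p‖))) atTop (𝓝 0) := by
    have := (((hw (p - T p)).sub_const (@inner ℝ H _ p (p - T p))).const_mul (-2)).add
      ((hy.mul hy).add ((hy.const_mul 2).mul_const (C + ‖p‖)))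
    simpa using this
  have h3 := ge_of_tendsto h2 h1
  have : ‖p - T p‖ = 0 := by nlinarith [norm_nonneg (p - T p)]
  exact (sub_eq_zero.1 (norm_eq_zero.1 this)).symm

/-- Lemma of Xu -/
lemma xu (a α ε : ℕ → ℝ) (ha : ∀ n, 0 ≤ a n) (hα : ∀ n, 0 ≤ α n ∧ α n ≤ 1) (hs : ¬ Summable α)
    (hε : Tendsto ε atTop (𝓝 0)) (h : ∀ n, a (n+1) ≤ (1 - α n) * a n + α n * ε n) :
    Tendsto a atTop (𝓝 0) := by
  have hsum := (not_summable_iff_tendsto_nat_atTop_of_nonneg (fun n => (hα n).1)).1 hs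
  rw [Metric.tendsto_atTop]
  intro e he
  obtain ⟨N, hN⟩ := (hε.eventually (ge_mem_nhds (by linarith : (0:ℝ) < e / 2))).exists_forall_of_atTop
  have key : ∀ n, N ≤ n → a n - e / 2 ≤ Real.exp (∑ i ∈ Finset.range N, α i - ∑ i ∈ Finset.range n, α i) * a N := by
    intro n hn
    induction n, hn using Nat.le_induction with
    | base => simp; linarith
    | succ n hn ih =>
      have h1 := h n
      have h2 := hN n hn
      have h3 : a (n+1) - e / 2 ≤ (1 - α n) * (a n - e / 2) := by nlinarith [(hα n).1]
      rw [Finset.sum_range_succ, ← sub_sub, sub_eq_add_neg _ (α n), Real.exp_add]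
      have h4 : 1 - α n ≤ Real.exp (-α n) := by linarith [Real.add_one_le_exp (-α n)]
      have h5 : 0 ≤ Real.exp (∑ i ∈ Finset.range N, α i - ∑ i ∈ Finset.range n, α i) * a N :=
        mul_nonneg (Real.exp_pos _).le (ha N)
      have h6 := mul_le_mul_of_nonneg_left ih (by linarith [(hα n).2] : 0 ≤ 1 - α n)
      have h7 := mul_le_mul_of_nonneg_right h4 h5
      nlinarith
  have hlim : Tendsto (fun n => Real.exp (∑ i ∈ Finset.range N, α i - ∑ i ∈ Finset.range n, α i) * a N) atTop (𝓝 0) := by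
    have h1 : Tendsto (fun n => ∑ i ∈ Finset.range N, α i - ∑ i ∈ Finset.range n, α i) atTop atBot :=
      tendsto_atBot_add_const_left _ _ (tendsto_neg_atTop_atBot.comp hsum)
    simpa using (Real.tendsto_exp_atBot.comp h1).mul_const (a N)
  obtain ⟨N2, hN2⟩ := (hlim.eventually (gt_mem_nhds (by linarith : (0:ℝ) < e / 2))).exists_forall_of_atTop
  refine ⟨max N N2, fun n hn => ?_⟩
  have h1 := key n (le_trans (le_max_left _ _) hn)
  have h2 := hN2 n (le_trans (le_max_right _ _) hn)
  rw [Real.dist_eq, sub_zero, abs_of_nonneg (ha n)]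
  linarith

lemma line_deriv {H : Type*} [NormedAddCommGroup H] [InnerProductSpace ℝ H] [CompleteSpace H]
    (h : H → ℝ) (h' : H → H) (hg : ∀ x, HasGradientAt h (h' x) x) (x y : H) (t : ℝ) :
    HasDerivAt (fun t : ℝ => h (x + t • (y - x))) (@inner ℝ H _ (h' (x + t • (y - x))) (y - x)) t := by
  have h1 : HasDerivAt (fun t : ℝ => x + t • (y - x)) (y - x) t := by
    simpa using ((hasDerivAt_id t).smul_const (y - x)).const_add x
  have h2 := (hg (x + t • (y - x))).hasFDerivAt.comp_hasDerivAt t h1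
  exact h2.congr_deriv (by simp)

lemma grad_ineq {H : Type*} [NormedAddCommGroup H] [InnerProductSpace ℝ H] [CompleteSpace H]
    (h : H → ℝ) (h' : H → H) (hc : ConvexOn ℝ Set.univ h)
    (hg : ∀ x, HasGradientAt h (h' x) x) (x y : H) :
    h x + @inner ℝ H _ (h' x) (y - x) ≤ h y := by
  have hc' : ConvexOn ℝ Set.univ (fun t : ℝ => h (x + t • (y - x))) := by
    refine ⟨convex_univ, fun a _ b _ p q hp hq hpq => ?_⟩
    have := hc.2 (Set.mem_univ (x + a • (y - x))) (Set.mem_univ (x + b • (y - x))) hp hq hpq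
    have e : p • (x + a • (y - x)) + q • (x + b • (y - x)) = x + (p • a + q • b) • (y - x) := by
      have : p = 1 - q := by linarith
      subst this
      simp only [smul_eq_mul]
      module
    rwa [e] at this
  have hd := line_deriv h h' hg x y 0
  have := hc'.le_slope_of_hasDerivAt (Set.mem_univ 0) (Set.mem_univ 1) one_pos hd
  simp [slope] at this
  linarith

lemma descent {H : Type*} [NormedAddCommGroup H] [InnerProductSpace ℝ H] [CompleteSpace H]
    (h : H → ℝ) (h' : H → H) (hg : ∀ x, HasGradientAt h (h' x) x) (K : ℝ)
    (hl : ∀ x y, ‖h' x - h' y‖ ≤ K * ‖x - y‖) (x y : H) :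
    h y ≤ h x + @inner ℝ H _ (h' x) (y - x) + K / 2 * ‖y - x‖ ^ 2 := by
  let g : ℝ → ℝ := fun t => t * @inner ℝ H _ (h' x) (y - x) + t ^ 2 * (K / 2 * ‖y - x‖ ^ 2)
    - h (x + t • (y - x))
  have hd : ∀ t, HasDerivAt g (@inner ℝ H _ (h' x) (y - x) + (2 * t) * (K / 2 * ‖y - x‖ ^ 2)
      - @inner ℝ H _ (h' (x + t • (y - x))) (y - x)) t := by
    intro t
    have h1 := (hasDerivAt_id t).mul_const (@inner ℝ H _ (h' x) (y - x))
    have h2 := ((hasDerivAt_id t).pow 2).mul_const (K / 2 * ‖y - x‖ ^ 2)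
    have := (h1.add h2).sub (line_deriv h h' hg x y t)
    exact this.congr_deriv (by simp)
  have hm : MonotoneOn g (Set.Icc 0 1) := by
    refine monotoneOn_of_deriv_nonneg (convex_Icc 0 1) (fun t _ => (hd t).continuousAt.continuousWithinAt)
      (fun t _ => (hd t).differentiableAt.differentiableWithinAt) ?_
    intro t ht
    rw [interior_Icc] at ht
    rw [(hd t).deriv]
    have a := real_inner_le_norm (h' (x + t • (y - x)) - h' x) (y - x)
    have b := hl (x + t • (y - x)) x
    have c : ‖x + t • (y - x) - x‖ = t * ‖y - x‖ := by
      rw [add_sub_cancel_left, norm_smul, Real.norm_eq_abs, abs_of_pos ht.1]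
    rw [c] at b
    rw [inner_sub_left] at a
    have d := mul_le_mul_of_nonneg_right b (norm_nonneg (y - x))
    nlinarith
  have := hm (by simp : (0:ℝ) ∈ Set.Icc (0:ℝ) 1) (by simp : (1:ℝ) ∈ Set.Icc (0:ℝ) 1) zero_le_one
  simp [g] at this
  linarith

lemma baillon_haddad {H : Type*} [NormedAddCommGroup H] [InnerProductSpace ℝ H] [CompleteSpace H]
    (h : H → ℝ) (h' : H → H) (hc : ConvexOn ℝ Set.univ h) (hg : ∀ x, HasGradientAt h (h' x) x) (L : ℝ)
    (hL : 0 < L) (hl : ∀ x y, ‖h' x - h' y‖ ≤ (1 / L) * ‖x - y‖) (x y : H) :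
    L * ‖h' x - h' y‖ ^ 2 ≤ @inner ℝ H _ (h' x - h' y) (x - y) := by
  have key : ∀ x y : H, h x + @inner ℝ H _ (h' x) (y - x) + L / 2 * ‖h' x - h' y‖ ^ 2 ≤ h y := by
    intro x y
    set s := h' y - h' x with hs
    have a := grad_ineq h h' hc hg x (y - L • s)
    have b := descent h h' hg (1 / L) hl y (y - L • s)
    have e1 : y - L • s - x = (y - x) - L • s := by abel
    have e2 : y - L • s - y = - (L • s) := by abel
    have e3 : ‖h' x - h' y‖ = ‖s‖ := norm_sub_rev _ _
    rw [e2, inner_neg_right, norm_neg, norm_smul, inner_smul_right, mul_pow, Real.norm_eq_abs, sq_abs] at b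
    rw [e1, inner_sub_right, inner_smul_right] at a
    have e4 : @inner ℝ H _ (h' y) s - @inner ℝ H _ (h' x) s = ‖s‖ ^ 2 := by
      rw [← inner_sub_left, ← hs, real_inner_self_eq_norm_sq]
    have e5 : 1 / L / 2 * (L ^ 2 * ‖s‖ ^ 2) = L / 2 * ‖s‖ ^ 2 := by field_simp
    rw [e5] at b
    rw [e3]
    have e6 : L * @inner ℝ H _ (h' y) s - L * @inner ℝ H _ (h' x) s = L * ‖s‖ ^ 2 := by rw [← e4]; ring
    linarith
  have a := key x y
  have b := key y x
  rw [norm_sub_rev] at b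
  have e : @inner ℝ H _ (h' x - h' y) (x - y) = - @inner ℝ H _ (h' x) (y - x) - @inner ℝ H _ (h' y) (x - y) := by
    rw [inner_sub_left, ← neg_sub y x, inner_neg_right]
  rw [e]
  linarith

lemma grad_step_nonexp {H : Type*} [NormedAddCommGroup H] [InnerProductSpace ℝ H] [CompleteSpace H]
    (h : H → ℝ) (h' : H → H) (hc : ConvexOn ℝ Set.univ h) (hg : ∀ x, HasGradientAt h (h' x) x) (L : ℝ)
    (hL : 0 < L) (hl : ∀ x y, ‖h' x - h' y‖ ≤ (1 / L) * ‖x - y‖) (l : ℝ) (hl0 : 0 < l) (hl2 : l ≤ 2 * L)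
    (x y : H) : ‖(x - y) - l • (h' x - h' y)‖ ≤ ‖x - y‖ := by
  have a := baillon_haddad h h' hc hg L hL hl x y
  refine abs_le_of_sq_le_sq' ?_ (norm_nonneg _) |>.2
  rw [norm_sub_sq_real, inner_smul_right, norm_smul, mul_pow, Real.norm_eq_abs, sq_abs, real_inner_comm]
  have b := mul_le_mul_of_nonneg_right hl2 (sq_nonneg ‖h' x - h' y‖)
  nlinarith

lemma affine_minorant {H : Type*} [NormedAddCommGroup H] [InnerProductSpace ℝ H] [CompleteSpace H]
    (F : H → ℝ) (hc : ConvexOn ℝ Set.univ F) (hF : Continuous F) (p : H) (a : ℝ) (ha : a < F p) :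
    ∃ g : H, ∀ y, a + @inner ℝ H _ (y - p) g ≤ F y := by
  obtain ⟨l, c, h1, h2⟩ := hc.exists_affine_le_of_lt (𝕜 := ℝ) (Set.mem_univ p) ha isClosed_univ
    (hF.lowerSemicontinuous.lowerSemicontinuousOn _)
  refine ⟨(InnerProductSpace.toDual ℝ H).symm l, fun y => ?_⟩
  have h3 := h1 ⟨y, Set.mem_univ y⟩
  rw [real_inner_comm, InnerProductSpace.toDual_symm_apply, map_sub]
  simp at h3 h2
  linarith

lemma rec_bdd (e β : ℕ → ℝ) (G : ℝ) (hG : 0 ≤ G) (he : ∀ n, 0 ≤ e n) (hβ : Tendsto β atTop (𝓝 0))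
    (h : ∀ n ≥ 1, e (n+1) ≤ G + β n * e n) : ∃ C, ∀ n, e n ≤ C := by
  obtain ⟨N, hN⟩ := (hβ.eventually (ge_mem_nhds (by norm_num : (0:ℝ) < 1 / 2))).exists_forall_of_atTop
  set B := 2 * G + ∑ k ∈ Finset.range (N + 2), e k with hB
  have hsmall : ∀ n, n < N + 2 → e n ≤ B := by
    intro n hn
    have := Finset.single_le_sum (f := e) (fun i _ => he i) (Finset.mem_range.2 hn)
    linarith
  refine ⟨B, fun n => ?_⟩
  induction n with
  | zero => exact hsmall 0 (by omega)
  | succ n ih =>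
    by_cases hn : n + 1 < N + 2
    · exact hsmall _ hn
    · have h1 := h n (by omega)
      have h2 := hN n (by omega)
      have h3 := mul_le_mul_of_nonneg_right h2 (he n)
      have h4 : 0 ≤ ∑ k ∈ Finset.range (N + 2), e k := Finset.sum_nonneg fun i _ => he i
      linarith

lemma stage_bounds {H : Type*} [NormedAddCommGroup H] [InnerProductSpace ℝ H]
    (h' T : H → H) (L : ℝ) (hL : 0 < L)
    (hlip : ∀ x y : H, ‖h' x - h' y‖ ≤ (1 / L) * ‖x - y‖)
    (hT : ∀ x y : H, ‖T x - T y‖ ≤ ‖x - y‖)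
    (θ β : ℕ → ℝ) (hθ : ∀ n, 0 ≤ θ n ∧ θ n < 1) (hβ : ∀ n, 0 < β n ∧ β n ≤ 1)
    (hβ_lim : Tendsto β atTop (𝓝 0))
    (W Z D Y : ℕ → H) (u : H)
    (hz : ∀ n ≥ 1, Z n = W n + θ n • (W n - W (n-1)))
    (hd : ∀ n ≥ 1, D (n+1) = -(h' (Z n)) + β n • D n)
    (hWb : ∃ C, ∀ n, ‖W n‖ ≤ C) (hYb : ∃ C, ∀ n ≥ 1, ‖Y n‖ ≤ C) :
    ∃ K, 0 ≤ K ∧ ‖u‖ ≤ K ∧ (∀ n, ‖W n‖ ≤ K) ∧ (∀ n, ‖D n‖ ≤ K) ∧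
      ∀ n ≥ 1, ‖Z n‖ ≤ K ∧ ‖h' (Z n)‖ ≤ K ∧ ‖Y n‖ ≤ K ∧ ‖T (Y n)‖ ≤ K := by
  obtain ⟨C, hC⟩ := hWb
  obtain ⟨C2, hC2⟩ := hYb
  have hC0 : 0 ≤ C := (norm_nonneg _).trans (hC 0)
  have hC20 : 0 ≤ C2 := (norm_nonneg _).trans (hC2 1 le_rfl)
  have hZ : ∀ n ≥ 1, ‖Z n‖ ≤ 3 * C := by
    intro n hn
    rw [hz n hn]
    have h1 : ‖θ n • (W n - W (n-1))‖ ≤ 1 * (C + C) := by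
      rw [norm_smul, Real.norm_eq_abs, abs_of_nonneg (hθ n).1]
      exact mul_le_mul (hθ n).2.le ((norm_sub_le _ _).trans (add_le_add (hC _) (hC _))) (norm_nonneg _) zero_le_one
    linarith [norm_add_le (W n) (θ n • (W n - W (n-1))), hC n]
  set G := ‖h' 0‖ + (1 / L) * (3 * C) with hG
  have hG0 : 0 ≤ G := by positivity
  have hGb : ∀ n ≥ 1, ‖h' (Z n)‖ ≤ G := by
    intro n hn
    have h1 := hlip (Z n) 0
    rw [sub_zero] at h1
    have h2 : (1 / L) * ‖Z n‖ ≤ (1 / L) * (3 * C) := by gcongr; exact hZ n hn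
    have h3 : ‖h' (Z n)‖ ≤ ‖h' (Z n) - h' 0‖ + ‖h' 0‖ := by
      simpa using norm_add_le (h' (Z n) - h' 0) (h' 0)
    linarith
  obtain ⟨CD, hCD⟩ := rec_bdd (fun n => ‖D n‖) β G hG0 (fun n => norm_nonneg _) hβ_lim (by
    intro n hn
    rw [hd n hn]
    have h1 := norm_add_le (-(h' (Z n))) (β n • D n)
    rw [norm_neg, norm_smul, Real.norm_eq_abs, abs_of_pos (hβ n).1] at h1
    linarith [hGb n hn])
  have hCD0 : 0 ≤ CD := (norm_nonneg _).trans (hCD 0)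
  refine ⟨‖u‖ + 3 * C + G + CD + C2 + ‖T 0‖, by positivity, ?_, ?_, ?_, ?_⟩
  · linarith [norm_nonneg (T 0)]
  · intro n; linarith [norm_nonneg (T 0), norm_nonneg u, hC n]
  · intro n; linarith [norm_nonneg (T 0), norm_nonneg u, hCD n]
  · intro n hn
    have h1 : ‖T (Y n)‖ ≤ C2 + ‖T 0‖ := by
      have h1 := hT (Y n) 0
      rw [sub_zero] at h1
      have h3 : ‖T (Y n)‖ ≤ ‖T (Y n) - T 0‖ + ‖T 0‖ := by
        simpa using norm_add_le (T (Y n) - T 0) (T 0)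
      linarith [hC2 n hn]
    have := hZ n hn
    have := hGb n hn
    have := hC2 n hn
    have := norm_nonneg u
    have := norm_nonneg (T 0)
    refine ⟨?_, ?_, ?_, ?_⟩ <;> linarith

set_option maxHeartbeats 1000000 in
lemma stage_A {H : Type*} [NormedAddCommGroup H] [InnerProductSpace ℝ H] [CompleteSpace H]
    (f h : H → ℝ) (h' T : H → H) (L : ℝ)
    (hf_conv : ConvexOn ℝ Set.univ f) (hh_conv : ConvexOn ℝ Set.univ h)
    (hh_grad : ∀ x : H, HasGradientAt h (h' x) x)
    (hL : 0 < L)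
    (hlip : ∀ x y : H, ‖h' x - h' y‖ ≤ (1 / L) * ‖x - y‖)
    (hT : ∀ x y : H, ‖T x - T y‖ ≤ ‖x - y‖)
    (θ lam β α : ℕ → ℝ) (σ : ℝ) 
    (hθ_range : ∀ n, 0 ≤ θ n ∧ θ n < 1)
    (hlam_pos : ∀ n, 0 < lam n)
    (hlam_le : ∀ n, lam n ≤ 2 * L)
    (hβ_range : ∀ n, 0 < β n ∧ β n ≤ 1)
    (hα_range : ∀ n, 0 < α n ∧ α n ≤ 1)
    (hθ_anti : Antitone θ) (hlam_anti : Antitone lam)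
    (hβ_anti : Antitone β)
    (hC2 : Tendsto (fun n => (1 / α (n+1)) * |1 / lam (n+1) - 1 / lam n|) atTop (𝓝 0))
    (hC3 : Tendsto (fun n => (1 / lam (n+1)) * |1 - α n / α (n+1)|) atTop (𝓝 0))
    (hC5 : Tendsto (fun n => θ n / (α (n+1) * lam (n+1))) atTop (𝓝 0))
    (hC6 : ∀ n, lam n / lam (n+1) ≤ σ)
    (hC7 : Tendsto (fun n => β n / α (n+1)) atTop (𝓝 0))
    (W Z D Y W2 : ℕ → H) (u : H)
    (hz : ∀ n ≥ 1, Z n = W n + θ n • (W n - W (n-1)))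
    (hd : ∀ n ≥ 1, D (n+1) = -(h' (Z n)) + β n • D n)
    (hy : ∀ n ≥ 1, ∀ v : H,
      f (Y n) + (1 / (2 * lam n)) * ‖Z n + lam n • D (n+1) - Y n‖ ^ 2
        ≤ f v + (1 / (2 * lam n)) * ‖Z n + lam n • D (n+1) - v‖ ^ 2)
    (hw : ∀ n ≥ 1, W2 n = α n • u + (1 - α n) • T (Y n))
    (K : ℝ) (hK0 : 0 ≤ K) (hu : ‖u‖ ≤ K) (hW : ∀ n, ‖W n‖ ≤ K) (hD : ∀ n, ‖D n‖ ≤ K)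
    (hb : ∀ n ≥ 1, ‖Z n‖ ≤ K ∧ ‖h' (Z n)‖ ≤ K ∧ ‖Y n‖ ≤ K ∧ ‖T (Y n)‖ ≤ K) :
    ∃ ε : ℕ → ℝ, Tendsto ε atTop (𝓝 0) ∧ ∀ n ≥ 1, 
      ‖W2 (n+1) - W2 n‖ ≤ (1 - α (n+1)) * ‖W (n+1) - W n‖ + α (n+1) * lam (n+1) * ε n := by
  refine ⟨fun n => 2 * K * ((1 / lam (n+1)) * |1 - α n / α (n+1)|)
    + 4 * K * (θ n / (α (n+1) * lam (n+1)))
    + (K * lam 0) * ((1 / α (n+1)) * |1 / lam (n+1) - 1 / lam n|)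
    + (K * (1 + σ)) * (β n / α (n+1))
    + (2 * K + lam 0 * K) * ((1 / α (n+1)) * |1 / lam (n+1) - 1 / lam n|), ?_, ?_⟩
  · have := ((((hC3.const_mul (2 * K)).add (hC5.const_mul (4 * K))).add (hC2.const_mul (K * lam 0))).add
      (hC7.const_mul (K * (1 + σ)))).add (hC2.const_mul (2 * K + lam 0 * K))
    simpa using this
  intro n hn
  have l0 := hlam_pos n
  have l1 := hlam_pos (n+1)
  have a0 := hα_range n
  have a1 := hα_range (n+1)
  have la : lam (n+1) ≤ lam n := hlam_anti (Nat.le_succ n)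
  have la0 : lam n ≤ lam 0 := hlam_anti (Nat.zero_le n)
  have ba : β (n+1) ≤ β n := hβ_anti (Nat.le_succ n)
  have ta : θ (n+1) ≤ θ n := hθ_anti (Nat.le_succ n)
  have b0 := hβ_range n
  have b1 := hβ_range (n+1)
  have t0 := hθ_range n
  have t1 := hθ_range (n+1)
  obtain ⟨z0, g0, y0, Ty0⟩ := hb n hn
  obtain ⟨z1, g1, y1, Ty1⟩ := hb (n+1) (by omega)
  have nsm : ∀ (c : ℝ) (v : H) (B : ℝ), 0 ≤ c → ‖v‖ ≤ B → ‖c • v‖ ≤ c * B := by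
    intro c v B hc hv
    rw [norm_smul, Real.norm_eq_abs, abs_of_nonneg hc]
    exact mul_le_mul_of_nonneg_left hv hc
  -- W2
  have hW2 : ‖W2 (n+1) - W2 n‖ ≤ (1 - α (n+1)) * ‖Y (n+1) - Y n‖ + |α (n+1) - α n| * (2 * K) := by
    rw [hw n hn, hw (n+1) (by omega)]
    have e : α (n+1) • u + (1 - α (n+1)) • T (Y (n+1)) - (α n • u + (1 - α n) • T (Y n))
      = (1 - α (n+1)) • (T (Y (n+1)) - T (Y n)) + (α (n+1) - α n) • (u - T (Y n)) := by module
    rw [e]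
    refine (norm_add_le _ _).trans (add_le_add ?_ ?_)
    · exact nsm _ _ _ (by linarith) (hT _ _)
    · rw [norm_smul, Real.norm_eq_abs]
      refine mul_le_mul_of_nonneg_left ((norm_sub_le _ _).trans ?_) (abs_nonneg _)
      linarith
  -- Y
  have hY := prox_compare f (lam (n+1)) (lam n) l1 l0 _ _ _ _
    (prox_ineq f hf_conv _ l1 _ _ (hy (n+1) (by omega))) (prox_ineq f hf_conv _ l0 _ _ (hy n hn))
  have hVY : ‖Z n + lam n • D (n+1) - Y n‖ ≤ 2 * K + lam 0 * K := by
    have h1 := nsm _ _ _ l0.le (hD (n+1))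
    have h2 := norm_sub_le (Z n + lam n • D (n+1)) (Y n)
    have h3 := norm_add_le (Z n) (lam n • D (n+1))
    have h4 := mul_le_mul_of_nonneg_right la0 hK0
    linarith
  have hY2 := mul_le_mul_of_nonneg_left hVY (abs_nonneg (1 - lam (n+1) / lam n))
  -- V
  have hV : ‖Z (n+1) + lam (n+1) • D (n+1+1) - (Z n + lam n • D (n+1))‖ ≤ ‖Z (n+1) - Z n‖
      + (lam n - lam (n+1)) * K + (lam (n+1) * β (n+1) * K + lam n * β n * K) := by
    have e : Z (n+1) + lam (n+1) • D (n+1+1) - (Z n + lam n • D (n+1)) =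
      ((Z (n+1) - Z n) - lam (n+1) • (h' (Z (n+1)) - h' (Z n))) + (lam n - lam (n+1)) • h' (Z n)
      + ((lam (n+1) * β (n+1)) • D (n+1) - (lam n * β n) • D n) := by
      rw [hd (n+1) (by omega), hd n hn]
      module
    rw [e]
    refine (norm_add_le _ _).trans (add_le_add ((norm_add_le _ _).trans (add_le_add ?_ ?_))
      ((norm_sub_le _ _).trans (add_le_add ?_ ?_)))
    · exact grad_step_nonexp h h' hh_conv hh_grad L hL hlip _ l1 (hlam_le _) _ _
    · exact nsm _ _ _ (by linarith) g0
    · exact nsm _ _ _ (mul_pos l1 b1.1).le (hD _)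
    · exact nsm _ _ _ (mul_pos l0 b0.1).le (hD _)
  -- Z
  have hZ : ‖Z (n+1) - Z n‖ ≤ ‖W (n+1) - W n‖ + 4 * K * θ n := by
    have e : Z (n+1) - Z n = (W (n+1) - W n) + (θ (n+1) • (W (n+1) - W n) - θ n • (W n - W (n-1))) := by
      rw [hz (n+1) (by omega), hz n hn, Nat.add_sub_cancel]
      abel
    rw [e]
    have h1 := nsm (θ (n+1)) (W (n+1) - W n) (2 * K) t1.1 ((norm_sub_le _ _).trans (by linarith [hW (n+1), hW n]))
    have h2 := nsm (θ n) (W n - W (n-1)) (2 * K) t0.1 ((norm_sub_le _ _).trans (by linarith [hW (n-1), hW n]))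
    have h3 := norm_add_le (W (n+1) - W n) (θ (n+1) • (W (n+1) - W n) - θ n • (W n - W (n-1)))
    have h4 := norm_sub_le (θ (n+1) • (W (n+1) - W n)) (θ n • (W n - W (n-1)))
    have h5 := mul_le_mul_of_nonneg_right ta (by linarith : 0 ≤ 2 * K)
    linarith
  set A := α (n+1) with hA
  set l := lam (n+1) with hl
  have p3 : A * l * ((1 / l) * |1 - α n / A|) = |A - α n| := by
    have : A - α n = A * (1 - α n / A) := by field_simp [a1.1.ne']
    rw [this, abs_mul, abs_of_pos a1.1]
    field_simp
  have p5 : A * l * (θ n / (A * l)) = θ n := by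
    have := a1.1
    field_simp
  have p2 : A * l * ((1 / A) * |1 / l - 1 / lam n|) = |1 - l / lam n| := by
    have : 1 - l / lam n = l * (1 / l - 1 / lam n) := by field_simp
    rw [this, abs_mul, abs_of_pos l1]
    have := a1.1
    field_simp
  have p2' : lam n - l ≤ lam 0 * |1 - l / lam n| := by
    have h1 : lam n - l = lam n * (1 - l / lam n) := by field_simp
    rw [h1]
    exact mul_le_mul la0 (le_abs_self _) (by rw [sub_nonneg, div_le_one l0]; exact la) (by linarith)
  have p7 : A * l * (β n / A) = l * β n := by
    have := a1.1
    field_simp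
  have p6 : lam n ≤ σ * l := by
    have := hC6 n
    rwa [div_le_iff₀ l1] at this
  have q1 : l * β (n+1) * K ≤ l * β n * K := by gcongr
  have q2 : lam n * β n * K ≤ σ * l * β n * K := by
    have := b0.1.le
    gcongr
  have q3 := mul_le_mul_of_nonneg_right p2' hK0
  have hYf : ‖Y (n+1) - Y n‖ ≤ ‖W (n+1) - W n‖ + (4 * K * θ n + lam 0 * |1 - l / lam n| * K +
      (l * β n * K + σ * l * β n * K) + |1 - l / lam n| * (2 * K + lam 0 * K)) := by linarith
  have hE : 0 ≤ 4 * K * θ n + lam 0 * |1 - l / lam n| * K +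
      (l * β n * K + σ * l * β n * K) + |1 - l / lam n| * (2 * K + lam 0 * K) := by
    have := b0.1.le
    have := t0.1
    have := hlam_pos 0
    have hs : 0 ≤ σ * l * β n * K := by
      have : 0 ≤ σ * l := by linarith
      positivity
    positivity
  have hm := mul_le_mul_of_nonneg_left hYf (by linarith : 0 ≤ 1 - A)
  have hm2 : (1 - A) * (4 * K * θ n + lam 0 * |1 - l / lam n| * K +
      (l * β n * K + σ * l * β n * K) + |1 - l / lam n| * (2 * K + lam 0 * K)) ≤ 4 * K * θ n + lam 0 * |1 - l / lam n| * K +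
      (l * β n * K + σ * l * β n * K) + |1 - l / lam n| * (2 * K + lam 0 * K) :=
    mul_le_of_le_one_left hE (by linarith)
  have hfin : A * l * (2 * K * ((1 / l) * |1 - α n / A|)
    + 4 * K * (θ n / (A * l))
    + (K * lam 0) * ((1 / A) * |1 / l - 1 / lam n|)
    + (K * (1 + σ)) * (β n / A)
    + (2 * K + lam 0 * K) * ((1 / A) * |1 / l - 1 / lam n|)) =
    2 * K * |A - α n| + 4 * K * θ n + (K * lam 0) * |1 - l / lam n| + (K * (1 + σ)) * (l * β n)
      + (2 * K + lam 0 * K) * |1 - l / lam n| := by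
    linear_combination (2 * K) * p3 + (4 * K) * p5 + (K * lam 0) * p2 + (K * (1 + σ)) * p7
      + (2 * K + lam 0 * K) * p2
  show _ ≤ _ + A * l * (2 * K * ((1 / l) * |1 - α n / A|)
    + 4 * K * (θ n / (A * l))
    + (K * lam 0) * ((1 / A) * |1 / l - 1 / lam n|)
    + (K * (1 + σ)) * (β n / A)
    + (2 * K + lam 0 * K) * ((1 / A) * |1 / l - 1 / lam n|))
  rw [hfin]
  linarith

set_option maxHeartbeats 1000000 in
lemma stage_B {H : Type*} [NormedAddCommGroup H] [InnerProductSpace ℝ H] [CompleteSpace H]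
    (f h : H → ℝ) (h' T : H → H) (L : ℝ)
    (hf_conv : ConvexOn ℝ Set.univ f) (hh_conv : ConvexOn ℝ Set.univ h)
    (hh_grad : ∀ x : H, HasGradientAt h (h' x) x)
    (hL : 0 < L)
    (hlip : ∀ x y : H, ‖h' x - h' y‖ ≤ (1 / L) * ‖x - y‖)
    (hT : ∀ x y : H, ‖T x - T y‖ ^ 2 ≤ @inner ℝ H _ (T x - T y) (x - y))
    (θ lam β α : ℕ → ℝ)
    (hθ_range : ∀ n, 0 ≤ θ n ∧ θ n < 1)
    (hlam_pos : ∀ n, 0 < lam n)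
    (hβ_range : ∀ n, 0 < β n ∧ β n ≤ 1)
    (hα_range : ∀ n, 0 < α n ∧ α n ≤ 1)
    (hlam_anti : Antitone lam)
    (hβ_lim : Tendsto β atTop (𝓝 0))
    (hC4 : Tendsto (fun n => α n / lam n) atTop (𝓝 0))
    (hC5 : Tendsto (fun n => θ n / (α (n+1) * lam (n+1))) atTop (𝓝 0))
    (W Z D Y W2 : ℕ → H) (u : H)
    (hz : ∀ n ≥ 1, Z n = W n + θ n • (W n - W (n-1)))
    (hd : ∀ n ≥ 1, D (n+1) = -(h' (Z n)) + β n • D n)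
    (hy : ∀ n ≥ 1, ∀ v : H,
      f (Y n) + (1 / (2 * lam n)) * ‖Z n + lam n • D (n+1) - Y n‖ ^ 2
        ≤ f v + (1 / (2 * lam n)) * ‖Z n + lam n • D (n+1) - v‖ ^ 2)
    (hw : ∀ n ≥ 1, W2 n = α n • u + (1 - α n) • T (Y n))
    (K : ℝ) (hK0 : 0 ≤ K) (hu : ‖u‖ ≤ K) (hW : ∀ n, ‖W n‖ ≤ K) (hD : ∀ n, ‖D n‖ ≤ K)
    (hb : ∀ n ≥ 1, ‖Z n‖ ≤ K ∧ ‖h' (Z n)‖ ≤ K ∧ ‖Y n‖ ≤ K ∧ ‖T (Y n)‖ ≤ K)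
    (v : H) (hv : T v = v) :
    ∃ (K' : ℝ) (ε : ℕ → ℝ), 0 ≤ K' ∧ Tendsto ε atTop (𝓝 0) ∧ ∀ n ≥ 1,
      ‖W2 n - v‖ ^ 2 + ‖Z n - Y n‖ ^ 2 + ‖Y n - T (Y n)‖ ^ 2 ≤
       ‖W n - v‖ ^ 2 + 2 * lam n * ((f v + h v) - (f (Y n) + h (Y n)) + K' * ‖Z n - Y n‖ + ε n) := by
  set R := K + ‖v‖ with hR
  have hR0 : 0 ≤ R := by positivity
  have hθl : Tendsto (fun n => θ n / lam n) atTop (𝓝 0) := by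
    refine squeeze_zero (fun n => div_nonneg (hθ_range n).1 (hlam_pos n).le) (fun n => ?_) hC5
    refine div_le_div_of_nonneg_left (hθ_range n).1 (mul_pos (hα_range _).1 (hlam_pos _)) ?_
    exact (mul_le_of_le_one_left (hlam_pos _).le (hα_range _).2).trans (hlam_anti (Nat.le_succ n))
  refine ⟨R / L, fun n => β n * (K * R) + (θ n / lam n) * ((4 * K * R + 4 * K ^ 2) / 2) +
    (α n / lam n) * (R ^ 2 / 2), by positivity, ?_, ?_⟩
  · have := ((hβ_lim.mul_const (K * R)).add (hθl.mul_const ((4 * K * R + 4 * K ^ 2) / 2))).add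
      (hC4.mul_const (R ^ 2 / 2))
    simpa using this
  intro n hn
  obtain ⟨z0, g0, y0, Ty0⟩ := hb n hn
  have l0 := hlam_pos n
  have a0 := hα_range n
  have b0 := hβ_range n
  have t0 := hθ_range n
  have h1 := prox_ineq f hf_conv _ l0 _ _ (hy n hn) v
  have e1 : Z n + lam n • D (n+1) - Y n = (Z n - Y n) + lam n • D (n+1) := by abel
  have hvY : ‖v - Y n‖ ≤ R := (norm_sub_le _ _).trans (by linarith)
  have e2 : ‖Z n - v‖ ^ 2 = ‖Z n - Y n‖ ^ 2 - 2 * @inner ℝ H _ (Z n - Y n) (v - Y n) + ‖Y n - v‖ ^ 2 := by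
    have : Z n - v = (Z n - Y n) - (v - Y n) := by abel
    rw [this, norm_sub_sq_real, norm_sub_rev v]
  rw [e1, inner_add_left, real_inner_smul_left] at h1
  have e3 : @inner ℝ H _ (D (n+1)) (v - Y n) = - @inner ℝ H _ (h' (Y n)) (v - Y n)
      - @inner ℝ H _ (h' (Z n) - h' (Y n)) (v - Y n) + β n * @inner ℝ H _ (D n) (v - Y n) := by
    rw [hd n hn, inner_add_left, real_inner_smul_left, inner_neg_left, inner_sub_left]
    ring
  have h2 := grad_ineq h h' hh_conv hh_grad (Y n) v
  have h3 : @inner ℝ H _ (h' (Z n) - h' (Y n)) (v - Y n) ≤ R / L * ‖Z n - Y n‖ := by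
    refine (real_inner_le_norm _ _).trans ?_
    refine (mul_le_mul (hlip _ _) hvY (norm_nonneg _) (by positivity)).trans (le_of_eq ?_)
    ring
  have h4 : - (K * R) ≤ @inner ℝ H _ (D n) (v - Y n) := by
    have := abs_real_inner_le_norm (D n) (v - Y n)
    have h5 : ‖D n‖ * ‖v - Y n‖ ≤ K * R := mul_le_mul (hD n) hvY (norm_nonneg _) hK0
    linarith [neg_abs_le (@inner ℝ H _ (D n) (v - Y n))]
  have h4' := mul_le_mul_of_nonneg_left h4 b0.1.le
  have h6 : - @inner ℝ H _ (D (n+1)) (v - Y n) ≤ h v - h (Y n) + R / L * ‖Z n - Y n‖ + β n * (K * R) := by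
    rw [e3]; linarith
  have h6' := mul_le_mul_of_nonneg_left h6 l0.le
  have hYv : ‖Y n - v‖ ^ 2 + ‖Z n - Y n‖ ^ 2 ≤ ‖Z n - v‖ ^ 2 + 2 * lam n * ((f v + h v) - (f (Y n) + h (Y n))
      + R / L * ‖Z n - Y n‖ + β n * (K * R)) := by linarith
  have hWv : ‖W n - v‖ ≤ R := (norm_sub_le _ _).trans (by linarith [hW n])
  have hZv : ‖Z n - v‖ ^ 2 ≤ ‖W n - v‖ ^ 2 + θ n * (4 * K * R + 4 * K ^ 2) := by
    have e : Z n - v = (W n - v) + θ n • (W n - W (n-1)) := by rw [hz n hn]; abel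
    rw [e, norm_add_sq_real, inner_smul_right, norm_smul, mul_pow, Real.norm_eq_abs, sq_abs]
    have q1 : ‖W n - W (n-1)‖ ≤ 2 * K := (norm_sub_le _ _).trans (by linarith [hW n, hW (n-1)])
    have q2 : @inner ℝ H _ (W n - v) (W n - W (n-1)) ≤ R * (2 * K) :=
      (real_inner_le_norm _ _).trans (mul_le_mul hWv q1 (norm_nonneg _) hR0)
    have q3 := mul_le_mul_of_nonneg_left q2 t0.1
    have q4 : ‖W n - W (n-1)‖ ^ 2 ≤ (2 * K) ^ 2 := by gcongr
    have q5 : θ n ^ 2 * ‖W n - W (n-1)‖ ^ 2 ≤ θ n * (2 * K) ^ 2 := by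
      refine mul_le_mul ?_ q4 (by positivity) t0.1
      nlinarith
    linarith
  have hTv := firm_fix T hT (Y n) v hv
  have hW2 : ‖W2 n - v‖ ^ 2 ≤ ‖T (Y n) - v‖ ^ 2 + α n * R ^ 2 := by
    have e : W2 n - v = α n • (u - v) + (1 - α n) • (T (Y n) - v) := by rw [hw n hn]; module
    have q0 : ‖u - v‖ ≤ R := (norm_sub_le _ _).trans (by linarith)
    have q1 : ‖W2 n - v‖ ≤ α n * R + (1 - α n) * ‖T (Y n) - v‖ := by
      rw [e]
      refine (norm_add_le _ _).trans (add_le_add ?_ ?_)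
      · rw [norm_smul, Real.norm_eq_abs, abs_of_pos a0.1]
        exact mul_le_mul_of_nonneg_left q0 a0.1.le
      · rw [norm_smul, Real.norm_eq_abs, abs_of_nonneg (by linarith)]
    have q2 : ‖W2 n - v‖ ^ 2 ≤ (α n * R + (1 - α n) * ‖T (Y n) - v‖) ^ 2 := by gcongr
    have q3 : (α n * R + (1 - α n) * ‖T (Y n) - v‖) ^ 2 = α n * R ^ 2 + (1 - α n) * ‖T (Y n) - v‖ ^ 2
      - α n * (1 - α n) * (R - ‖T (Y n) - v‖) ^ 2 := by ring
    have q4 : 0 ≤ α n * (1 - α n) * (R - ‖T (Y n) - v‖) ^ 2 :=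
      mul_nonneg (mul_nonneg a0.1.le (by linarith)) (sq_nonneg _)
    have q5 : 0 ≤ α n * ‖T (Y n) - v‖ ^ 2 := mul_nonneg a0.1.le (sq_nonneg _)
    linarith
  have r1 : 2 * lam n * ((θ n / lam n) * ((4 * K * R + 4 * K ^ 2) / 2)) = θ n * (4 * K * R + 4 * K ^ 2) := by
    field_simp
  have r2 : 2 * lam n * ((α n / lam n) * (R ^ 2 / 2)) = α n * R ^ 2 := by field_simp
  simp only
  have r3 : 2 * lam n * ((f v + h v) - (f (Y n) + h (Y n)) + R / L * ‖Z n - Y n‖ +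
    (β n * (K * R) + (θ n / lam n) * ((4 * K * R + 4 * K ^ 2) / 2) + (α n / lam n) * (R ^ 2 / 2))) =
    2 * lam n * ((f v + h v) - (f (Y n) + h (Y n)) + R / L * ‖Z n - Y n‖ + β n * (K * R))
    + θ n * (4 * K * R + 4 * K ^ 2) + α n * R ^ 2 := by
    rw [← r1, ← r2]; ring
  rw [r3]
  linarith

lemma weak_transfer {H : Type*} [NormedAddCommGroup H] [InnerProductSpace ℝ H] (a b : ℕ → H) (p : H)
    (hab : Tendsto (fun n => ‖b n - a n‖) atTop (𝓝 0))
    (ha : ∀ q : H, Tendsto (fun k => @inner ℝ H _ (a k) q) atTop (𝓝 (@inner ℝ H _ p q))) :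
    ∀ q : H, Tendsto (fun k => @inner ℝ H _ (b k) q) atTop (𝓝 (@inner ℝ H _ p q)) := by
  intro q
  have h1 : Tendsto (fun k => @inner ℝ H _ (b k - a k) q) atTop (𝓝 0) := by
    refine squeeze_zero_norm (fun n => norm_inner_le_norm (𝕜 := ℝ) (b n - a n) q) ?_
    simpa using hab.mul_const ‖q‖
  have h2 := h1.add (ha q)
  rw [zero_add] at h2
  refine h2.congr fun k => ?_
  rw [inner_sub_left]; ring

lemma tele (g : ℕ → ℝ) (M : ℕ) : ∑ i ∈ Finset.Icc 1 M, (g (i+1) - g i) = g (M+1) - g 1 := by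
  induction M with
  | zero => simp
  | succ n ih => rw [Finset.sum_Icc_succ_top (by omega), ih]; ring

set_option maxHeartbeats 2000000 in
theorem alg1_weak_cluster_points_in_Omega
    {H : Type*} [NormedAddCommGroup H] [InnerProductSpace ℝ H] [CompleteSpace H]
    (M : ℕ) (hM : 1 ≤ M)
    (f h : ℕ → H → ℝ) (h' : ℕ → H → H) (L : ℕ → ℝ) (T : ℕ → H → H)
    (hf_cont : ∀ i ∈ Finset.Icc 1 M, Continuous (f i))
    (hf_conv : ∀ i ∈ Finset.Icc 1 M, ConvexOn ℝ Set.univ (f i))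
    (hh_conv : ∀ i ∈ Finset.Icc 1 M, ConvexOn ℝ Set.univ (h i))
    (hh_grad : ∀ i ∈ Finset.Icc 1 M, ∀ x : H, HasGradientAt (h i) (h' i x) x)
    (hL_pos : ∀ i ∈ Finset.Icc 1 M, 0 < L i)
    (hh_lip : ∀ i ∈ Finset.Icc 1 M, ∀ x y : H, ‖h' i x - h' i y‖ ≤ (1 / L i) * ‖x - y‖)
    (hT_firm : ∀ i ∈ Finset.Icc 1 M, ∀ x y : H,
      ‖T i x - T i y‖ ^ 2 ≤ @inner ℝ H _ (T i x - T i y) (x - y))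
    (S : Set H) (hS : S = ⋂ i ∈ Finset.Icc 1 M, {x : H | T i x = x}) (hS_ne : S.Nonempty)
    (θ lam β α : ℕ → ℝ) (σ : ℝ) (hσ : 1 ≤ σ)
    (hθ_range : ∀ n, 0 ≤ θ n ∧ θ n < 1)
    (hlam_pos : ∀ n, 0 < lam n)
    (hlam_le : ∀ n, ∀ i ∈ Finset.Icc 1 M, lam n ≤ 2 * L i)
    (hβ_range : ∀ n, 0 < β n ∧ β n ≤ 1)
    (hα_range : ∀ n, 0 < α n ∧ α n ≤ 1)
    (hθ_anti : Antitone θ) (hlam_anti : Antitone lam)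
    (hβ_anti : Antitone β) (hα_anti : Antitone α)
    (hθ_lim : Tendsto θ atTop (𝓝 0)) (hlam_lim : Tendsto lam atTop (𝓝 0))
    (hβ_lim : Tendsto β atTop (𝓝 0)) (hα_lim : Tendsto α atTop (𝓝 0))
    (hC1 : ¬ Summable α)
    (hC2 : Tendsto (fun n => (1 / α (n+1)) * |1 / lam (n+1) - 1 / lam n|) atTop (𝓝 0))
    (hC3 : Tendsto (fun n => (1 / lam (n+1)) * |1 - α n / α (n+1)|) atTop (𝓝 0))
    (hC4 : Tendsto (fun n => α n / lam n) atTop (𝓝 0))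
    (hC5 : Tendsto (fun n => θ n / (α (n+1) * lam (n+1))) atTop (𝓝 0))
    (hC6 : ∀ n, lam n / lam (n+1) ≤ σ)
    (hC7 : Tendsto (fun n => β n / α (n+1)) atTop (𝓝 0))
    (x : ℕ → H) (w z y d : ℕ → ℕ → H) (u : ℕ → H)
    (hd1 : ∀ i ∈ Finset.Icc 1 M, d 1 i = -(h' i (z 0 i)))
    (hw1 : ∀ n ≥ 1, w n 1 = x n)
    (hz : ∀ n ≥ 1, ∀ i ∈ Finset.Icc 1 M, z n i = w n i + θ n • (w n i - w (n-1) i))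
    (hd : ∀ n ≥ 1, ∀ i ∈ Finset.Icc 1 M, d (n+1) i = -(h' i (z n i)) + β n • d n i)
    (hy : ∀ n ≥ 1, ∀ i ∈ Finset.Icc 1 M, ∀ v : H,
      f i (y n i) + (1 / (2 * lam n)) * ‖z n i + lam n • d (n+1) i - y n i‖ ^ 2
        ≤ f i v + (1 / (2 * lam n)) * ‖z n i + lam n • d (n+1) i - v‖ ^ 2)
    (hw : ∀ n ≥ 1, ∀ i ∈ Finset.Icc 1 M,
      w n (i+1) = α n • u i + (1 - α n) • T i (y n i))
    (hx : ∀ n ≥ 1, x (n+1) = w n (M+1))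
    (hy_bdd : ∀ i ∈ Finset.Icc 1 M, ∃ C, ∀ n ≥ 1, ‖y n i‖ ≤ C)
    (ψ : H → ℝ) (hψ : ∀ v : H, ψ v = ∑ i ∈ Finset.Icc 1 M, (f i v + h i v))
    (hΩ_ne : ∃ p ∈ S, ∀ v ∈ S, ψ p ≤ ψ v)
    : ∀ i ∈ Finset.Icc 1 M, ∀ p : H,
      (∃ φ : ℕ → ℕ, StrictMono φ ∧
        ∀ q : H, Tendsto (fun k => @inner ℝ H _ (w (φ k) i) q) atTop (𝓝 (@inner ℝ H _ p q))) →
      p ∈ S ∧ ∀ v ∈ S, ψ p ≤ ψ v := by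
  have hTn : ∀ i ∈ Finset.Icc 1 M, ∀ x y : H, ‖T i x - T i y‖ ≤ ‖x - y‖ :=
    fun i hi => firm_nonexp (T i) (hT_firm i hi)
  have hfix : ∀ v ∈ S, ∀ i ∈ Finset.Icc 1 M, T i v = v := by
    intro v hv i hi
    rw [hS] at hv
    exact Set.mem_iInter₂.1 hv i hi
  -- boundedness of w
  have hW2b : ∀ i ∈ Finset.Icc 1 M, ∃ C, ∀ n ≥ 1, ‖w n (i+1)‖ ≤ C := by
    intro i hi
    obtain ⟨C, hC⟩ := hy_bdd i hi
    refine ⟨‖u i‖ + (C + ‖T i 0‖), fun n hn => ?_⟩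
    rw [hw n hn i hi]
    have a0 := hα_range n
    refine (norm_add_le _ _).trans (add_le_add ?_ ?_)
    · rw [norm_smul, Real.norm_eq_abs, abs_of_pos a0.1]
      exact mul_le_of_le_one_left (norm_nonneg _) a0.2
    · rw [norm_smul, Real.norm_eq_abs, abs_of_nonneg (by linarith)]
      refine (mul_le_of_le_one_left (norm_nonneg _) (by linarith)).trans ?_
      have h1 := hTn i hi (y n i) 0
      rw [sub_zero] at h1
      have h3 : ‖T i (y n i)‖ ≤ ‖T i (y n i) - T i 0‖ + ‖T i 0‖ := by
        simpa using norm_add_le (T i (y n i) - T i 0) (T i 0)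
      linarith [hC n hn]
  have hwx : ∀ n ≥ 1, w (n+1) 1 = w n (M+1) := by
    intro n hn
    rw [hw1 (n+1) (by omega), hx n hn]
  have hWb : ∀ i ∈ Finset.Icc 1 M, ∃ C, ∀ n, ‖w n i‖ ≤ C := by
    intro i hi
    have hi' := Finset.mem_Icc.1 hi
    have h1 : ∃ C, ∀ n ≥ 2, ‖w n i‖ ≤ C := by
      by_cases h : i = 1
      · subst h
        obtain ⟨C, hC⟩ := hW2b M (Finset.mem_Icc.2 ⟨hM, le_rfl⟩)
        refine ⟨C, fun n hn => ?_⟩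
        obtain ⟨m, rfl⟩ : ∃ m, n = m + 1 := ⟨n - 1, by omega⟩
        rw [hwx m (by omega)]
        exact hC m (by omega)
      · obtain ⟨j, rfl⟩ : ∃ j, i = j + 1 := ⟨i - 1, by omega⟩
        obtain ⟨C, hC⟩ := hW2b j (Finset.mem_Icc.2 ⟨by omega, by omega⟩)
        exact ⟨C, fun n hn => hC n (by omega)⟩
    obtain ⟨C, hC⟩ := h1
    have hC0 : 0 ≤ C := (norm_nonneg _).trans (hC 2 le_rfl)
    refine ⟨C + ‖w 0 i‖ + ‖w 1 i‖, fun n => ?_⟩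
    have := norm_nonneg (w 0 i)
    have := norm_nonneg (w 1 i)
    rcases n with _ | _ | n
    · linarith
    · simp only [zero_add]; linarith
    · linarith [hC (n+1+1) (by omega)]
  have hbd := fun i (hi : i ∈ Finset.Icc 1 M) => stage_bounds (h' i) (T i) (L i) (hL_pos i hi) (hh_lip i hi)
    (hTn i hi) θ β hθ_range hβ_range hβ_lim (fun n => w n i) (fun n => z n i) (fun n => d n i)
    (fun n => y n i) (u i) (fun n hn => hz n hn i hi) (fun n hn => hd n hn i hi) (hWb i hi) (hy_bdd i hi)
  choose! K hK0 hKu hKW hKD hKb using hbd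
  have h1M : 1 ∈ Finset.Icc 1 M := Finset.mem_Icc.2 ⟨le_rfl, hM⟩
  have hMM : M ∈ Finset.Icc 1 M := Finset.mem_Icc.2 ⟨hM, le_rfl⟩
  -- asymptotic regularity
  have hA := fun i (hi : i ∈ Finset.Icc 1 M) => stage_A (f i) (h i) (h' i) (T i) (L i) (hf_conv i hi)
    (hh_conv i hi) (hh_grad i hi) (hL_pos i hi) (hh_lip i hi)
    (hTn i hi) θ lam β α σ hθ_range hlam_pos (fun n => hlam_le n i hi) hβ_range hα_range hθ_anti hlam_anti
    hβ_anti hC2 hC3 hC5 hC6 hC7 (fun n => w n i) (fun n => z n i) (fun n => d n i)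
    (fun n => y n i) (fun n => w n (i+1)) (u i) (fun n hn => hz n hn i hi) (fun n hn => hd n hn i hi)
    (fun n hn => hy n hn i hi) (fun n hn => hw n hn i hi) (K i) (hK0 i hi) (hKu i hi) (hKW i hi) (hKD i hi)
    (hKb i hi)
  have chain : ∀ j, 1 ≤ j → j ≤ M → ∃ ε : ℕ → ℝ, Tendsto ε atTop (𝓝 0) ∧ ∀ n ≥ 1,
      ‖w (n+1) (j+1) - w n (j+1)‖ ≤ (1 - α (n+1)) * ‖w (n+1) 1 - w n 1‖ + α (n+1) * lam (n+1) * ε n := by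
    intro j hj
    induction j, hj using Nat.le_induction with
    | base => intro _; exact hA 1 h1M
    | succ j hj ih =>
      intro hjM
      obtain ⟨ε, hε, h1⟩ := ih (by omega)
      obtain ⟨ε', hε', h2⟩ := hA (j+1) (Finset.mem_Icc.2 ⟨by omega, hjM⟩)
      refine ⟨fun n => ε n + ε' n, by simpa using hε.add hε', fun n hn => ?_⟩
      have a1 := h1 n hn
      have a2 := h2 n hn
      have a3 : (1 - α (n+1)) * ‖w (n+1) (j+1) - w n (j+1)‖ ≤ ‖w (n+1) (j+1) - w n (j+1)‖ :=
        mul_le_of_le_one_left (norm_nonneg _) (by linarith [(hα_range (n+1)).1])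
      linarith
  have hb : Tendsto (fun n => ‖w (n+1) 1 - w n 1‖ / lam (n+1)) atTop (𝓝 0) := by
    obtain ⟨ε, hε, hch⟩ := chain M hM le_rfl
    have := xu (fun n => ‖w (n+1+1) 1 - w (n+1) 1‖ / lam (n+1+1)) (fun n => α (n+2))
      (fun n => ε (n+1) + 2 * K 1 * ((1 / α (n+2+1)) * |1 / lam (n+2+1) - 1 / lam (n+2)|))
      (fun n => div_nonneg (norm_nonneg _) (hlam_pos _).le)
      (fun n => ⟨(hα_range _).1.le, (hα_range _).2⟩)
      (by rw [summable_nat_add_iff]; exact hC1)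
      (by
        have t1 := (tendsto_add_atTop_iff_nat 1).2 hε
        have t2 := ((tendsto_add_atTop_iff_nat 2).2 hC2).const_mul (2 * K 1)
        simpa using t1.add t2)
      (by
        intro n
        have a1 := hch (n+1) (by omega)
        have l2 := hlam_pos (n+2)
        have l3 := hlam_pos (n+2+1)
        have A3 := (hα_range (n+2+1)).1
        have e1 : ‖w (n+1+1+1) 1 - w (n+1+1) 1‖ = ‖w (n+1+1) (M+1) - w (n+1) (M+1)‖ := by
          rw [hwx (n+1+1) (by omega), hwx (n+1) (by omega)]
        have hQ : ‖w (n+1+1+1) 1 - w (n+1+1) 1‖ ≤ 2 * K 1 :=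
          (norm_sub_le _ _).trans (by linarith [hKW 1 h1M (n+1+1+1), hKW 1 h1M (n+1+1)])
        rw [← e1] at a1
        set Q := ‖w (n+1+1+1) 1 - w (n+1+1) 1‖ with hQd
        have hQ0 : 0 ≤ Q := norm_nonneg _
        set q := ‖w (n+1+1) 1 - w (n+1) 1‖ with hqd
        show Q / lam (n+2+1) ≤ (1 - α (n+2)) * (q / lam (n+2)) + α (n+2) * (ε (n+1) + 2 * K 1 * ((1 / α (n+2+1)) * |1 / lam (n+2+1) - 1 / lam (n+2)|))
        have a1' : Q ≤ (1 - α (n+2)) * q + α (n+2) * lam (n+2) * ε (n+1) := a1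
        have b1 : Q / lam (n+2) ≤ (1 - α (n+2)) * (q / lam (n+2)) + α (n+2) * ε (n+1) := by
          rw [div_le_iff₀ l2]
          refine a1'.trans (le_of_eq ?_)
          field_simp
        have b2 : Q / lam (n+2+1) = Q / lam (n+2) + Q * (1 / lam (n+2+1) - 1 / lam (n+2)) := by ring
        have b3 : Q * (1 / lam (n+2+1) - 1 / lam (n+2)) ≤ 2 * K 1 * |1 / lam (n+2+1) - 1 / lam (n+2)| :=
          (mul_le_mul_of_nonneg_left (le_abs_self _) hQ0).trans (mul_le_mul_of_nonneg_right hQ (abs_nonneg _))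
        have b4 : |1 / lam (n+2+1) - 1 / lam (n+2)| ≤ α (n+2) * ((1 / α (n+2+1)) * |1 / lam (n+2+1) - 1 / lam (n+2)|) := by
          rw [← mul_assoc]
          refine le_mul_of_one_le_left (abs_nonneg _) ?_
          rw [mul_one_div, one_le_div A3]
          exact hα_anti (Nat.le_succ _)
        have b5 := mul_le_mul_of_nonneg_left b4 (by linarith [hK0 1 h1M] : 0 ≤ 2 * K 1)
        linarith)
    exact (tendsto_add_atTop_iff_nat 1).1 this
  -- main inequality
  have hmain : ∀ v ∈ S, ∃ (K' δ : ℕ → ℝ), Tendsto δ atTop (𝓝 0) ∧ (∀ i ∈ Finset.Icc 1 M, 0 ≤ K' i) ∧ ∀ n ≥ 1,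
      ∑ i ∈ Finset.Icc 1 M, (‖z n i - y n i‖ ^ 2 + ‖y n i - T i (y n i)‖ ^ 2) ≤
      2 * lam n * (∑ i ∈ Finset.Icc 1 M, ((f i v + h i v) - (f i (y n i) + h i (y n i)) + K' i * ‖z n i - y n i‖) + δ n) := by
    intro v hv
    have hB := fun i (hi : i ∈ Finset.Icc 1 M) => stage_B (f i) (h i) (h' i) (T i) (L i) (hf_conv i hi)
      (hh_conv i hi) (hh_grad i hi) (hL_pos i hi) (hh_lip i hi)
      (hT_firm i hi) θ lam β α hθ_range hlam_pos hβ_range hα_range hlam_anti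
      hβ_lim hC4 hC5 (fun n => w n i) (fun n => z n i) (fun n => d n i)
      (fun n => y n i) (fun n => w n (i+1)) (u i) (fun n hn => hz n hn i hi) (fun n hn => hd n hn i hi)
      (fun n hn => hy n hn i hi) (fun n hn => hw n hn i hi) (K i) (hK0 i hi) (hKu i hi) (hKW i hi) (hKD i hi)
      (hKb i hi) v (hfix v hv i hi)
    choose! K' ε hK' hε hBn using hB
    refine ⟨K', fun n => ∑ i ∈ Finset.Icc 1 M, ε i n + (K 1 + ‖v‖) * (‖w (n+1) 1 - w n 1‖ / lam (n+1)), ?_, hK', ?_⟩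
    · have t1 : Tendsto (fun n => ∑ i ∈ Finset.Icc 1 M, ε i n) atTop (𝓝 (∑ i ∈ Finset.Icc 1 M, (0:ℝ))) :=
        tendsto_finsetSum _ fun i hi => hε i hi
      simpa using t1.add (hb.const_mul (K 1 + ‖v‖))
    intro n hn
    have hs := Finset.sum_le_sum fun i hi => hBn i hi n hn
    have ht := tele (fun i => ‖w n i - v‖ ^ 2) M
    simp only [Finset.sum_add_distrib, ← Finset.mul_sum, Finset.sum_sub_distrib] at hs ht ⊢
    rw [← hwx n hn] at ht
    have r1 : ‖w n 1 - v‖ ≤ K 1 + ‖v‖ := (norm_sub_le _ _).trans (by linarith [hKW 1 h1M n])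
    have r2 : ‖w (n+1) 1 - v‖ ≤ K 1 + ‖v‖ := (norm_sub_le _ _).trans (by linarith [hKW 1 h1M (n+1)])
    have r3 : ‖w n 1 - v‖ ≤ ‖w (n+1) 1 - w n 1‖ + ‖w (n+1) 1 - v‖ := by
      have : w n 1 - v = - (w (n+1) 1 - w n 1) + (w (n+1) 1 - v) := by abel
      rw [this]
      exact (norm_add_le _ _).trans (by rw [norm_neg])
    have r4 : ‖w n 1 - v‖ ^ 2 - ‖w (n+1) 1 - v‖ ^ 2 ≤ ‖w (n+1) 1 - w n 1‖ * (2 * (K 1 + ‖v‖)) := by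
      have e : ‖w n 1 - v‖ ^ 2 - ‖w (n+1) 1 - v‖ ^ 2 = (‖w n 1 - v‖ - ‖w (n+1) 1 - v‖) * (‖w n 1 - v‖ + ‖w (n+1) 1 - v‖) := by ring
      rw [e]
      refine (mul_le_mul_of_nonneg_right (by linarith : _ ≤ ‖w (n+1) 1 - w n 1‖) (by positivity)).trans ?_
      exact mul_le_mul_of_nonneg_left (by linarith) (norm_nonneg _)
    have r5 : ‖w (n+1) 1 - w n 1‖ ≤ lam n * (‖w (n+1) 1 - w n 1‖ / lam (n+1)) := by
      rw [mul_div_assoc', le_div_iff₀ (hlam_pos _), mul_comm]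
      exact mul_le_mul_of_nonneg_right (hlam_anti (Nat.le_succ n)) (norm_nonneg _)
    have r6 := mul_le_mul_of_nonneg_right r5 (by linarith [hK0 1 h1M, norm_nonneg v] : 0 ≤ 2 * (K 1 + ‖v‖))
    linarith
  have hFconv : ∀ i ∈ Finset.Icc 1 M, ConvexOn ℝ Set.univ (fun x => f i x + h i x) :=
    fun i hi => (hf_conv i hi).add (hh_conv i hi)
  have hFcont : ∀ i ∈ Finset.Icc 1 M, Continuous (fun x => f i x + h i x) := fun i hi =>
    (hf_cont i hi).add (continuous_iff_continuousAt.2 fun x => (hh_grad i hi x).continuousAt)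
  -- vanishing residuals
  have hres : ∀ i ∈ Finset.Icc 1 M, Tendsto (fun n => ‖z n i - y n i‖) atTop (𝓝 0) ∧
      Tendsto (fun n => ‖y n i - T i (y n i)‖) atTop (𝓝 0) := by
    obtain ⟨v, hv⟩ := hS_ne
    obtain ⟨K', δ, hδ, hK', hmn⟩ := hmain v hv
    have hlow : ∀ i ∈ Finset.Icc 1 M, ∃ B, ∀ n ≥ 1, (f i v + h i v) - (f i (y n i) + h i (y n i)) ≤ B := by
      intro i hi
      obtain ⟨g, hg⟩ := affine_minorant (fun x => f i x + h i x) (hFconv i hi) (hFcont i hi) v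
        (f i v + h i v - 1) (by simp)
      refine ⟨1 + (K i + ‖v‖) * ‖g‖, fun n hn => ?_⟩
      have h1 := hg (y n i)
      have h2 := neg_abs_le (@inner ℝ H _ (y n i - v) g)
      have h3 := abs_real_inner_le_norm (y n i - v) g
      have h4 : ‖y n i - v‖ * ‖g‖ ≤ (K i + ‖v‖) * ‖g‖ :=
        mul_le_mul_of_nonneg_right ((norm_sub_le _ _).trans (by linarith [(hKb i hi n hn).2.2.1])) (norm_nonneg _)
      linarith
    choose! B hBl using hlow
    have hbound : ∀ n ≥ 1, ∑ i ∈ Finset.Icc 1 M, (‖z n i - y n i‖ ^ 2 + ‖y n i - T i (y n i)‖ ^ 2) ≤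
      2 * lam n * (∑ i ∈ Finset.Icc 1 M, (B i + K' i * (2 * K i)) + δ n) := by
      intro n hn
      refine (hmn n hn).trans (mul_le_mul_of_nonneg_left (add_le_add ?_ le_rfl) (by linarith [hlam_pos n]))
      refine Finset.sum_le_sum fun i hi => add_le_add (hBl i hi n hn) (mul_le_mul_of_nonneg_left ?_ (hK' i hi))
      obtain ⟨q1, -, q2, -⟩ := hKb i hi n hn
      exact (norm_sub_le _ _).trans (by linarith)
    have hlim0 : Tendsto (fun n => 2 * lam n * (∑ i ∈ Finset.Icc 1 M, (B i + K' i * (2 * K i)) + δ n)) atTop (𝓝 0) := by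
      have := (hlam_lim.const_mul 2).mul (hδ.const_add (∑ i ∈ Finset.Icc 1 M, (B i + K' i * (2 * K i))))
      simpa using this
    intro i hi
    have hone : ∀ n ≥ 1, ‖z n i - y n i‖ ^ 2 + ‖y n i - T i (y n i)‖ ^ 2 ≤
        2 * lam n * (∑ i ∈ Finset.Icc 1 M, (B i + K' i * (2 * K i)) + δ n) := fun n hn =>
      (Finset.single_le_sum (f := fun i => ‖z n i - y n i‖ ^ 2 + ‖y n i - T i (y n i)‖ ^ 2)
        (fun j _ => by positivity) hi).trans (hbound n hn)
    have hsq : ∀ e : ℕ → ℝ, (∀ n, 0 ≤ e n) → Tendsto (fun n => e n ^ 2) atTop (𝓝 0) → Tendsto e atTop (𝓝 0) := by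
      intro e he ht
      have := ht.sqrt
      rw [Real.sqrt_zero] at this
      exact this.congr fun n => Real.sqrt_sq (he n)
    constructor
    · refine hsq _ (fun n => norm_nonneg _) ?_
      refine squeeze_zero' (Eventually.of_forall fun n => sq_nonneg _) ?_ hlim0
      filter_upwards [eventually_ge_atTop 1] with n hn
      linarith [hone n hn, sq_nonneg ‖y n i - T i (y n i)‖]
    · refine hsq _ (fun n => norm_nonneg _) ?_
      refine squeeze_zero' (Eventually.of_forall fun n => sq_nonneg _) ?_ hlim0
      filter_upwards [eventually_ge_atTop 1] with n hn
      linarith [hone n hn, sq_nonneg ‖z n i - y n i‖]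
  -- differences
  have hyw : ∀ i ∈ Finset.Icc 1 M, Tendsto (fun n => ‖y n i - w n i‖) atTop (𝓝 0) := by
    intro i hi
    have t1 := (hres i hi).1.add (hθ_lim.mul_const (2 * K i))
    simp only [zero_mul, add_zero] at t1
    refine squeeze_zero' (Eventually.of_forall fun n => norm_nonneg _) ?_ t1
    filter_upwards [eventually_ge_atTop 1] with n hn
    have e : y n i - w n i = - (z n i - y n i) + θ n • (w n i - w (n-1) i) := by
      rw [hz n hn i hi]; abel
    rw [e]
    refine (norm_add_le _ _).trans (add_le_add (by rw [norm_neg]) ?_)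
    rw [norm_smul, Real.norm_eq_abs, abs_of_nonneg (hθ_range n).1]
    refine mul_le_mul_of_nonneg_left ((norm_sub_le _ _).trans ?_) (hθ_range n).1
    linarith [hKW i hi n, hKW i hi (n-1)]
  have hww : ∀ i ∈ Finset.Icc 1 M, Tendsto (fun n => ‖w n (i+1) - w n i‖) atTop (𝓝 0) := by
    intro i hi
    have t1 := ((hyw i hi).add (hres i hi).2).add (hα_lim.mul_const (2 * K i))
    simp only [zero_mul, add_zero] at t1
    refine squeeze_zero' (Eventually.of_forall fun n => norm_nonneg _) ?_ t1
    filter_upwards [eventually_ge_atTop 1] with n hn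
    have e : w n (i+1) - w n i = ((y n i - w n i) + - (y n i - T i (y n i))) + α n • (u i - T i (y n i)) := by
      rw [hw n hn i hi]; module
    rw [e]
    refine (norm_add_le _ _).trans (add_le_add ((norm_add_le _ _).trans (by rw [norm_neg])) ?_)
    rw [norm_smul, Real.norm_eq_abs, abs_of_pos (hα_range n).1]
    refine mul_le_mul_of_nonneg_left ((norm_sub_le _ _).trans ?_) (hα_range n).1.le
    linarith [hKu i hi, (hKb i hi n hn).2.2.2]
  -- cluster points
  rintro i₀ hi₀ p ⟨φ, hφ, hwk⟩
  have hφt := hφ.tendsto_atTop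
  have hφ1 : ∀ᶠ k in atTop, 1 ≤ φ k := hφt.eventually (eventually_ge_atTop 1)
  have hiff : ∀ i, 1 ≤ i → i ≤ M →
      ((∀ q : H, Tendsto (fun k => @inner ℝ H _ (w (φ k) i) q) atTop (𝓝 (@inner ℝ H _ p q))) ↔
      (∀ q : H, Tendsto (fun k => @inner ℝ H _ (w (φ k) 1) q) atTop (𝓝 (@inner ℝ H _ p q)))) := by
    intro i hi
    induction i, hi using Nat.le_induction with
    | base => intro _; exact Iff.rfl
    | succ j hj ih =>
      intro hjM
      rw [← ih (by omega)]
      have hd0 := (hww j (Finset.mem_Icc.2 ⟨hj, by omega⟩)).comp hφt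
      constructor
      · refine weak_transfer (fun k => w (φ k) (j+1)) (fun k => w (φ k) j) p ?_
        refine hd0.congr fun k => ?_
        exact norm_sub_rev _ _
      · exact weak_transfer (fun k => w (φ k) j) (fun k => w (φ k) (j+1)) p hd0
  have hwk1 := (hiff i₀ (Finset.mem_Icc.1 hi₀).1 (Finset.mem_Icc.1 hi₀).2).1 hwk
  have hywk : ∀ i ∈ Finset.Icc 1 M, ∀ q : H,
      Tendsto (fun k => @inner ℝ H _ (y (φ k) i) q) atTop (𝓝 (@inner ℝ H _ p q)) := by
    intro i hi
    have h1 := (hiff i (Finset.mem_Icc.1 hi).1 (Finset.mem_Icc.1 hi).2).2 hwk1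
    exact weak_transfer (fun k => w (φ k) i) (fun k => y (φ k) i) p ((hyw i hi).comp hφt) h1
  refine ⟨?_, ?_⟩
  · rw [hS]
    refine Set.mem_iInter₂.2 fun i hi => ?_
    refine demiclosed (T i) (hTn i hi) (fun k => y (φ k) i) p (K i) ?_ (hywk i hi) ((hres i hi).2.comp hφt)
    filter_upwards [hφ1] with k hk
    exact (hKb i hi _ hk).2.2.1
  · intro v hv
    obtain ⟨K', δ, hδ, hK', hmn⟩ := hmain v hv
    refine le_of_forall_pos_le_add fun e he => ?_
    have hMpos : (0:ℝ) < M := by exact_mod_cast hM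
    have hmin := fun i (hi : i ∈ Finset.Icc 1 M) => affine_minorant (fun x => f i x + h i x) (hFconv i hi)
      (hFcont i hi) p (f i p + h i p - e / M) (by linarith [div_pos he hMpos])
    choose! g hg using hmin
    have hlhs : Tendsto (fun k => ∑ i ∈ Finset.Icc 1 M, ((f i p + h i p - e / M) +
        (@inner ℝ H _ (y (φ k) i) (g i) - @inner ℝ H _ p (g i)))) atTop
        (𝓝 (∑ i ∈ Finset.Icc 1 M, ((f i p + h i p - e / M) + (@inner ℝ H _ p (g i) - @inner ℝ H _ p (g i))))) :=
      tendsto_finsetSum _ fun i hi => ((hywk i hi (g i)).sub_const _).const_add _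
    have hrhs : Tendsto (fun k => ψ v + (∑ i ∈ Finset.Icc 1 M, K' i * ‖z (φ k) i - y (φ k) i‖ + δ (φ k))) atTop
        (𝓝 (ψ v + (∑ i ∈ Finset.Icc 1 M, K' i * 0 + 0))) := by
      refine Tendsto.const_add _ (Tendsto.add ?_ (hδ.comp hφt))
      exact tendsto_finsetSum _ fun i hi => ((hres i hi).1.comp hφt).const_mul _
    have hle := le_of_tendsto_of_tendsto hlhs hrhs (by
      filter_upwards [hφ1] with k hk
      have h1 := hmn (φ k) hk
      have h2 : 0 ≤ 2 * lam (φ k) * (∑ i ∈ Finset.Icc 1 M, ((f i v + h i v) -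
          (f i (y (φ k) i) + h i (y (φ k) i)) + K' i * ‖z (φ k) i - y (φ k) i‖) + δ (φ k)) :=
        (Finset.sum_nonneg fun i _ => by positivity).trans h1
      have h3 := nonneg_of_mul_nonneg_right h2 (by linarith [hlam_pos (φ k)])
      have h4 : ∑ i ∈ Finset.Icc 1 M, ((f i p + h i p - e / M) +
        (@inner ℝ H _ (y (φ k) i) (g i) - @inner ℝ H _ p (g i))) ≤
          ∑ i ∈ Finset.Icc 1 M, (f i (y (φ k) i) + h i (y (φ k) i)) := by
        refine Finset.sum_le_sum fun i hi => ?_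
        rw [← inner_sub_left]
        exact hg i hi (y (φ k) i)
      rw [Finset.sum_add_distrib, Finset.sum_sub_distrib, ← hψ] at h3
      linarith)
    simp only [sub_self, add_zero, mul_zero, Finset.sum_const_zero] at hle
    rw [Finset.sum_sub_distrib, ← hψ, Finset.sum_const, Nat.card_Icc, Nat.add_sub_cancel, nsmul_eq_mul,
      mul_div_cancel₀ _ hMpos.ne'] at hle
    linarith
end

section
/- Let ψ = Σ_{i=1}^M (f_i + h_i) and Ω = {x̂ ∈ S : ψ(x̂) = min_{x∈S} ψ(x)}, assumed nonempty. If ψ is strictly convex, then for each i ∈ I the sequence {w_n^{(i)}} generated by Algorithm 1 converges weakly to a point in Ω (namely, the unique minimizer of ψ over S). -/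
open Filter Topology

section aux
variable {H : Type*} [NormedAddCommGroup H] [InnerProductSpace ℝ H]

theorem aux_prox {f : H → ℝ} (hf : ConvexOn ℝ Set.univ f) {l : ℝ} (hl : 0 < l) {a y : H}
    (hy : ∀ v : H, f y + (1 / (2 * l)) * ‖a - y‖ ^ 2 ≤ f v + (1 / (2 * l)) * ‖a - v‖ ^ 2) (v : H) :
    @inner ℝ H _ (a - y) (v - y) ≤ l * (f v - f y) := by
  have key : ∀ t : ℝ, 0 < t → t ≤ 1 →
      @inner ℝ H _ (a - y) (v - y) ≤ l * (f v - f y) + t * (‖v - y‖ ^ 2 / 2) := by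
    intro t ht ht1
    have h1 := hy ((1 - t) • y + t • v)
    have h2 := hf.2 (Set.mem_univ y) (Set.mem_univ v) (by linarith : 0 ≤ 1 - t) ht.le (by ring)
    have h3 : a - ((1 - t) • y + t • v) = (a - y) - t • (v - y) := by module
    rw [h3, norm_sub_sq_real (a - y), norm_smul, inner_smul_right, Real.norm_eq_abs, mul_pow, sq_abs] at h1
    simp only [smul_eq_mul] at h2
    have h4 : t * (f y - f v) ≤ (1 / (2 * l)) * (-(2 * (t * @inner ℝ H _ (a - y) (v - y)))
        + t ^ 2 * ‖v - y‖ ^ 2) := by nlinarith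
    have h5 : (1 / (2 * l)) * (-(2 * (t * @inner ℝ H _ (a - y) (v - y)))
        + t ^ 2 * ‖v - y‖ ^ 2) * l = t * (- @inner ℝ H _ (a - y) (v - y)
        + t * (‖v - y‖ ^ 2 / 2)) := by
      field_simp
    have h6 := mul_le_mul_of_nonneg_right h4 hl.le
    rw [h5, mul_assoc] at h6
    have h7 := le_of_mul_le_mul_left h6 ht
    linarith
  have hlim : Tendsto (fun t : ℝ => l * (f v - f y) + t * (‖v - y‖ ^ 2 / 2)) (𝓝[>] 0)
      (𝓝 (l * (f v - f y) + 0 * (‖v - y‖ ^ 2 / 2))) := by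
    apply Tendsto.mono_left _ nhdsWithin_le_nhds
    exact Continuous.tendsto (by fun_prop) 0
  rw [zero_mul, add_zero] at hlim
  refine ge_of_tendsto hlim ?_
  filter_upwards [Ioc_mem_nhdsGT (show (0:ℝ) < 1 by norm_num)] with t ht
  exact key t ht.1 ht.2

theorem aux_line_deriv [CompleteSpace H] {h : H → ℝ} {g : H → H} (hg : ∀ x, HasGradientAt h (g x) x) (x v : H) (t : ℝ) :
    HasDerivAt (fun t : ℝ => h (x + t • v)) (@inner ℝ H _ (g (x + t • v)) v) t := by
  have h1 := (hg (x + t • v)).hasFDerivAt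
  have h2 : HasDerivAt (fun t : ℝ => x + t • v) v t := by
    simpa using ((hasDerivAt_id t).smul_const v).const_add x
  have h3 := h1.comp_hasDerivAt t h2
  rw [InnerProductSpace.toDual_apply_apply] at h3
  exact h3

theorem aux_grad [CompleteSpace H] {h : H → ℝ} {g : H → H} (hc : ConvexOn ℝ Set.univ h)
    (hg : ∀ x, HasGradientAt h (g x) x) (x v : H) :
    h x + @inner ℝ H _ (g x) (v - x) ≤ h v := by
  have hc' : ConvexOn ℝ Set.univ (fun t : ℝ => h (x + t • (v - x))) := by
    refine ⟨convex_univ, ?_⟩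
    intro s _ t _ a b ha hb hab
    have := hc.2 (Set.mem_univ (x + s • (v - x))) (Set.mem_univ (x + t • (v - x))) ha hb hab
    convert this using 2
    rw [← eq_sub_iff_add_eq] at hab
    subst hab
    simp only [smul_eq_mul]
    module
  have h1 := hc'.le_slope_of_hasDerivAt (Set.mem_univ 0) (Set.mem_univ 1) one_pos
    (aux_line_deriv hg x (v - x) 0)
  simp [slope_def_field] at h1
  linarith

theorem aux_descent [CompleteSpace H] {h : H → ℝ} {g : H → H} {L : ℝ} (hL : 0 < L)
    (hg : ∀ x, HasGradientAt h (g x) x) (hlip : ∀ x y, ‖g x - g y‖ ≤ (1 / L) * ‖x - y‖) (x v : H) :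
    h v ≤ h x + @inner ℝ H _ (g x) (v - x) + 1 / (2 * L) * ‖v - x‖ ^ 2 := by
  have hd := aux_line_deriv hg x (v - x)
  have hB : ∀ t : ℝ, HasDerivAt (fun t : ℝ => h x + t * @inner ℝ H _ (g x) (v - x)
      + t ^ 2 * (1 / (2 * L) * ‖v - x‖ ^ 2))
      (@inner ℝ H _ (g x) (v - x) + 2 * t * (1 / (2 * L) * ‖v - x‖ ^ 2)) t := by
    intro t
    have h1 := ((hasDerivAt_id t).mul_const (@inner ℝ H _ (g x) (v - x))).const_add (h x)
    have h2 := (hasDerivAt_pow 2 t).mul_const (1 / (2 * L) * ‖v - x‖ ^ 2)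
    refine (h1.add h2).congr_deriv ?_
    simp
  have := image_le_of_deriv_right_le_deriv_boundary (a := 0) (b := 1)
    (f := fun t : ℝ => h (x + t • (v - x)))
    (fun t _ => (hd t).continuousAt.continuousWithinAt)
    (fun t _ => (hd t).hasDerivWithinAt) (B := fun t : ℝ => h x + t * @inner ℝ H _ (g x) (v - x)
      + t ^ 2 * (1 / (2 * L) * ‖v - x‖ ^ 2)) (by simp)
    (fun t _ => (hB t).continuousAt.continuousWithinAt)
    (fun t _ => (hB t).hasDerivWithinAt) (by
      intro t ht
      have h1 := real_inner_le_norm (g (x + t • (v - x)) - g x) (v - x)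
      have h2 := hlip (x + t • (v - x)) x
      rw [add_sub_cancel_left, norm_smul, Real.norm_eq_abs, abs_of_nonneg ht.1] at h2
      have h3 := mul_le_mul_of_nonneg_right h2 (norm_nonneg (v - x))
      rw [inner_sub_left] at h1
      have h4 : 2 * t * (1 / (2 * L) * ‖v - x‖ ^ 2) = 1 / L * (t * ‖v - x‖) * ‖v - x‖ := by
        field_simp
      linarith) (x := 1) (by simp)
  simpa using this

theorem aux_coco [CompleteSpace H] {h : H → ℝ} {g : H → H} {L : ℝ} (hL : 0 < L)
    (hc : ConvexOn ℝ Set.univ h)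
    (hg : ∀ x, HasGradientAt h (g x) x) (hlip : ∀ x y, ‖g x - g y‖ ≤ (1 / L) * ‖x - y‖) (x y : H) :
    L * ‖g x - g y‖ ^ 2 ≤ @inner ℝ H _ (g x - g y) (x - y) := by
  have key : ∀ x y : H, h y + @inner ℝ H _ (g y) (x - y) + L / 2 * ‖g x - g y‖ ^ 2 ≤ h x := by
    intro x y
    have h1 := aux_grad hc hg y (x - L • (g x - g y))
    have h2 := aux_descent hL hg hlip x (x - L • (g x - g y))
    have e1 : x - L • (g x - g y) - x = -(L • (g x - g y)) := by abel
    have e2 : x - L • (g x - g y) - y = (x - y) - L • (g x - g y) := by abel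
    rw [e1, norm_neg, norm_smul, inner_neg_right, inner_smul_right, Real.norm_eq_abs, mul_pow,
      sq_abs] at h2
    rw [e2, inner_sub_right, inner_smul_right] at h1
    have e3 : ‖g x - g y‖ ^ 2 = @inner ℝ H _ (g x) (g x - g y) - @inner ℝ H _ (g y) (g x - g y) := by
      rw [← inner_sub_left, real_inner_self_eq_norm_sq]
    have e4 : 1 / (2 * L) * (L ^ 2 * ‖g x - g y‖ ^ 2) = L / 2 * ‖g x - g y‖ ^ 2 := by
      field_simp
    rw [e4] at h2
    nlinarith
  have h1 := key x y
  have h2 := key y x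
  rw [norm_sub_rev] at h2
  have e : y - x = -(x - y) := by abel
  rw [e, inner_neg_right] at h2
  rw [inner_sub_left]
  linarith

theorem aux_nonexp [CompleteSpace H] {h : H → ℝ} {g : H → H} {L : ℝ} (hL : 0 < L)
    (hc : ConvexOn ℝ Set.univ h)
    (hg : ∀ x, HasGradientAt h (g x) x) (hlip : ∀ x y, ‖g x - g y‖ ≤ (1 / L) * ‖x - y‖)
    {l : ℝ} (hl : 0 < l) (hl2 : l ≤ 2 * L) (x y : H) :
    ‖(x - y) - l • (g x - g y)‖ ≤ ‖x - y‖ := by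
  have h1 := aux_coco hL hc hg hlip x y
  refine le_of_sq_le_sq ?_ (norm_nonneg _) 
  rw [@norm_sub_sq_real, norm_smul, inner_smul_right, Real.norm_eq_abs, mul_pow, sq_abs,
    real_inner_comm]
  have h2 : l * (l * ‖g x - g y‖ ^ 2) ≤ l * (2 * @inner ℝ H _ (g x - g y) (x - y)) := by
    apply mul_le_mul_of_nonneg_left _ hl.le
    nlinarith [sq_nonneg ‖g x - g y‖]
  nlinarith

theorem aux_minorant [CompleteSpace H] {f : H → ℝ} (hf : Continuous f)
    (hc : ConvexOn ℝ Set.univ f) (p : H) {e : ℝ} (he : 0 < e) :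
    ∃ g : H, ∀ v, f p - e + @inner ℝ H _ g (v - p) ≤ f v := by
  obtain ⟨l, c, h1, h2⟩ := hc.exists_affine_le_of_lt (𝕜 := ℝ) (Set.mem_univ p)
    (show f p - e < f p by linarith) isClosed_univ (hf.lowerSemicontinuous.lowerSemicontinuousOn _)
  refine ⟨(InnerProductSpace.toDual ℝ H).symm l, fun v => ?_⟩
  have h3 := h1 ⟨v, Set.mem_univ v⟩
  simp at h3 h2
  rw [InnerProductSpace.toDual_symm_apply, map_sub]
  linarith

theorem aux_weak [CompleteSpace H] (U : Ultrafilter ℕ) (x : ℕ → H) (K : ℝ)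
    (hx : ∀ᶠ n in (U : Filter ℕ), ‖x n‖ ≤ K) :
    ∃ p : H, ∀ q : H, Tendsto (fun n => @inner ℝ H _ (x n) q) (U : Filter ℕ)
      (𝓝 (@inner ℝ H _ p q)) := by
  have hK := WeakDual.isCompact_closedBall (𝕜 := ℝ) (E := H) 0 K
  let F : ℕ → WeakDual ℝ H := fun n => StrongDual.toWeakDual (InnerProductSpace.toDual ℝ H (x n))
  obtain ⟨P, -, hP⟩ := hK.ultrafilter_le_nhds' (U.map F) (by
    rw [Ultrafilter.mem_map]
    filter_upwards [hx] with n hn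
    simpa [F] using hn)
  refine ⟨(InnerProductSpace.toDual ℝ H).symm (WeakDual.toStrongDual P), fun q => ?_⟩
  rw [InnerProductSpace.toDual_symm_apply]
  have h1 : Tendsto F (U : Filter ℕ) (𝓝 P) := hP
  have h2 := ((WeakDual.eval_continuous (𝕜 := ℝ) q).tendsto P).comp h1
  exact h2

end aux

theorem aux_xu (a s e : ℕ → ℝ) (ha : ∀ n, 0 ≤ a n) (hs0 : ∀ n, 0 < s n) (hs1 : ∀ n, s n ≤ 1)
    (hs : ¬ Summable s) (he : Tendsto e atTop (𝓝 0))
    (h : ∀ᶠ n in atTop, a (n+1) ≤ (1 - s n) * a n + s n * e n) : Tendsto a atTop (𝓝 0) := by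
  rw [Metric.tendsto_atTop]
  intro ε hε
  have h1 : ∀ᶠ n in atTop, e n < ε / 2 := he.eventually_lt_const (by linarith)
  obtain ⟨N, hN⟩ := eventually_atTop.1 (h.and h1)
  have hsum : ¬ Summable (fun n => s (n + N)) := by
    rwa [summable_nat_add_iff N]
  have htop := (not_summable_iff_tendsto_nat_atTop_of_nonneg (fun n => (hs0 (n + N)).le)).1 hsum
  have hind : ∀ k, a (N + k) - ε / 2 ≤ Real.exp (-∑ i ∈ Finset.range k, s (i + N)) * a N := by
    intro k
    induction k with
    | zero => simp; linarith
    | succ k ih =>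
      obtain ⟨h2, h3⟩ := hN (N + k) (by omega)
      have h4 : a (N + (k + 1)) - ε / 2 ≤ (1 - s (N + k)) * (a (N + k) - ε / 2) := by
        have := mul_le_mul_of_nonneg_left h3.le (hs0 (N + k)).le
        rw [← add_assoc]
        linarith
      have h5 := mul_le_mul_of_nonneg_left ih (by linarith [hs1 (N + k)] : 0 ≤ 1 - s (N + k))
      have h6 : 1 - s (N + k) ≤ Real.exp (- s (N + k)) := by
        linarith [Real.add_one_le_exp (- s (N + k))]
      rw [Finset.sum_range_succ, neg_add, Real.exp_add, add_comm k N]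
      have h7 : (1 - s (N + k)) * (Real.exp (-∑ i ∈ Finset.range k, s (i + N)) * a N) ≤
          Real.exp (- s (N + k)) * (Real.exp (-∑ i ∈ Finset.range k, s (i + N)) * a N) :=
        mul_le_mul_of_nonneg_right h6 (mul_nonneg (Real.exp_pos _).le (ha N))
      linarith
  have hlim : Tendsto (fun k => Real.exp (-∑ i ∈ Finset.range k, s (i + N)) * a N) atTop (𝓝 0) := by
    have := (Real.tendsto_exp_neg_atTop_nhds_zero.comp htop).mul_const (a N)
    simpa using this
  obtain ⟨k0, hk0⟩ := eventually_atTop.1 (hlim.eventually_lt_const (by linarith : (0:ℝ) < ε / 2))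
  refine ⟨N + k0, fun n hn => ?_⟩
  have h8 := hind (n - N)
  have h9 := hk0 (n - N) (by omega)
  rw [show N + (n - N) = n by omega] at h8
  rw [Real.dist_eq, sub_zero, abs_of_nonneg (ha n)]
  linarith

section steps
variable {H : Type*} [NormedAddCommGroup H] [InnerProductSpace ℝ H]

theorem aux_step_v {w wp z y d dn g Ty u v w' : H} {θ l β α R fy fv : ℝ}
    (hl : 0 < l) (hθ0 : 0 ≤ θ) (hθ1 : θ ≤ 1) (hα0 : 0 < α) (hα1 : α ≤ 1) (hβ : 0 ≤ β)
    (hz : z = w + θ • (w - wp)) (hd : d = -g + β • dn)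
    (hp : @inner ℝ H _ (z + l • d - y) (v - y) ≤ l * (fv - fy))
    (hT : ‖Ty - v‖ ^ 2 ≤ @inner ℝ H _ (Ty - v) (y - v))
    (hw' : w' = α • u + (1 - α) • Ty)
    (b1 : ‖w - wp‖ ≤ R) (b2 : ‖w - v‖ ≤ R) (b3 : ‖y - v‖ ≤ R) (b4 : ‖u - v‖ ≤ R)
    (b5 : ‖dn‖ ≤ R) :
    ‖w' - v‖ ^ 2 + (‖z - y‖ ^ 2 + ‖y - Ty‖ ^ 2 + 2 * l * (fy - fv + @inner ℝ H _ g (y - v)))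
      ≤ ‖w - v‖ ^ 2 + R ^ 2 * (3 * θ + α + 2 * l * β) := by
  have hR : 0 ≤ R := (norm_nonneg _).trans b1
  have e1 : ‖z - v‖ ^ 2 ≤ ‖w - v‖ ^ 2 + 3 * θ * R ^ 2 := by
    have h1 : z - v = (w - v) + θ • (w - wp) := by rw [hz]; abel
    have h2 : ‖z - v‖ ≤ ‖w - v‖ + θ * R := by
      rw [h1]
      refine (norm_add_le _ _).trans ?_
      rw [norm_smul, Real.norm_eq_abs, abs_of_nonneg hθ0]
      gcongr
    have h3 : ‖z - v‖ ^ 2 ≤ (‖w - v‖ + θ * R) ^ 2 := by gcongr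
    have h4 : θ * (‖w - v‖ * R) ≤ θ * (R * R) := by gcongr
    have h5 : θ * θ * (R * R) ≤ 1 * θ * (R * R) := by gcongr
    nlinarith
  have e2 : ‖z - v‖ ^ 2 = ‖z - y‖ ^ 2 - 2 * @inner ℝ H _ (z - y) (v - y) + ‖v - y‖ ^ 2 := by
    rw [← norm_sub_sq_real]; congr 2; abel
  have e3 : @inner ℝ H _ (z + l • d - y) (v - y) = @inner ℝ H _ (z - y) (v - y)
      + l * (@inner ℝ H _ g (y - v) - β * @inner ℝ H _ dn (y - v)) := by
    have : z + l • d - y = (z - y) + l • d := by abel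
    rw [this, inner_add_left, inner_smul_left, hd, inner_add_left, inner_neg_left, inner_smul_left,
      ← neg_sub y v, inner_neg_right, inner_neg_right, inner_neg_right]
    simp only [conj_trivial]
    ring
  have e4 : @inner ℝ H _ dn (y - v) ≤ R ^ 2 := by
    refine (real_inner_le_norm _ _).trans ?_
    rw [pow_two]
    gcongr
  have e5 : l * β * @inner ℝ H _ dn (y - v) ≤ l * β * R ^ 2 := by gcongr
  have e6 : ‖y - Ty‖ ^ 2 = ‖y - v‖ ^ 2 - 2 * @inner ℝ H _ (Ty - v) (y - v) + ‖Ty - v‖ ^ 2 := by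
    rw [real_inner_comm, ← norm_sub_sq_real]; congr 2; abel
  have e7 : ‖w' - v‖ ^ 2 ≤ α * R ^ 2 + ‖Ty - v‖ ^ 2 := by
    have h1 : w' - v = α • (u - v) + (1 - α) • (Ty - v) := by rw [hw']; module
    have h2 : ‖w' - v‖ ≤ α * R + (1 - α) * ‖Ty - v‖ := by
      rw [h1]
      refine (norm_add_le _ _).trans ?_
      rw [norm_smul, norm_smul, Real.norm_eq_abs, Real.norm_eq_abs, abs_of_pos hα0,
        abs_of_nonneg (by linarith : 0 ≤ 1 - α)]
      gcongr
    have h3 : ‖w' - v‖ ^ 2 ≤ (α * R + (1 - α) * ‖Ty - v‖) ^ 2 := by gcongr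
    have h4 : 0 ≤ α * (1 - α) * (R - ‖Ty - v‖) ^ 2 := by
      have : 0 ≤ 1 - α := by linarith
      positivity
    have h5 : 0 ≤ α * ‖Ty - v‖ ^ 2 := by positivity
    nlinarith
  rw [norm_sub_rev v y] at e2
  rw [e3] at hp
  nlinarith

theorem aux_step_diff {w0 w1 wm z0 z1 y0 y1 d0 d1 dn0 dn1 g0 g1 Ty0 Ty1 u w0' w1' : H}
    {θ0 θ1 l0 l1 β0 β1 α0 α1 R f0 f1 : ℝ}
    (hl1 : 0 < l1) (hl : l1 ≤ l0) (hθ0 : 0 ≤ θ0) (hθ1 : 0 ≤ θ1)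
    (hα1 : 0 < α1) (hα1' : α1 ≤ 1) (hα : α1 ≤ α0) (hβ0 : 0 ≤ β0) (hβ1 : 0 ≤ β1)
    (hz0 : z0 = w0 + θ0 • (w0 - wm)) (hz1 : z1 = w1 + θ1 • (w1 - w0))
    (hd0 : d0 = -g0 + β0 • dn0) (hd1 : d1 = -g1 + β1 • dn1)
    (hp0 : @inner ℝ H _ (z0 + l0 • d0 - y0) (y1 - y0) ≤ l0 * (f1 - f0))
    (hp1 : @inner ℝ H _ (z1 + l1 • d1 - y1) (y0 - y1) ≤ l1 * (f0 - f1))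
    (hg : ‖(z1 - z0) - l1 • (g1 - g0)‖ ≤ ‖z1 - z0‖)
    (hT : ‖Ty1 - Ty0‖ ≤ ‖y1 - y0‖)
    (hw0' : w0' = α0 • u + (1 - α0) • Ty0) (hw1' : w1' = α1 • u + (1 - α1) • Ty1)
    (b1 : ‖w0 - wm‖ ≤ R) (b2 : ‖w1 - w0‖ ≤ R) (b3 : ‖g0‖ ≤ R) (b4 : ‖dn0‖ ≤ R) (b5 : ‖dn1‖ ≤ R)
    (b6 : ‖z0 + l0 • d0 - y0‖ ≤ R) (b7 : ‖u - Ty0‖ ≤ R) :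
    ‖w1' - w0'‖ ≤ (1 - α1) * ‖w1 - w0‖ + R * (θ1 + θ0 + (l0 - l1) + l1 * β1 + l0 * β0
      + (1 - l1 / l0) + (α0 - α1)) := by
  have hR : 0 ≤ R := (norm_nonneg _).trans b1
  have hl0 : 0 < l0 := by linarith
  have hr1 : l1 / l0 ≤ 1 := by rw [div_le_one hl0]; exact hl
  set r := l1 / l0 with hr
  have hr0 : 0 < r := by positivity
  have hrl : r * l0 = l1 := by rw [hr]; field_simp
  set a0 := z0 + l0 • d0 with ha0
  set a1 := z1 + l1 • d1 with ha1
  have e1 : ‖y1 - y0‖ ≤ ‖a1 - a0‖ + (1 - r) * R := by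
    have h1 : r * @inner ℝ H _ (a0 - y0) (y1 - y0) ≤ l1 * (f1 - f0) := by
      have := mul_le_mul_of_nonneg_left hp0 hr0.le
      rwa [← mul_assoc, hrl] at this
    have h2 : ‖y1 - y0‖ ^ 2 ≤ @inner ℝ H _ ((a1 - a0) + (1 - r) • (a0 - y0)) (y1 - y0) := by
      have h3 : (a1 - a0) + (1 - r) • (a0 - y0)
          = (y1 - y0) + (a1 - y1) - r • (a0 - y0) := by module
      rw [h3, inner_sub_left, inner_add_left, real_inner_self_eq_norm_sq, inner_smul_left]
      rw [← neg_sub y1 y0, inner_neg_right] at hp1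
      simp only [conj_trivial]
      linarith
    have h4 : ‖y1 - y0‖ ^ 2 ≤ (‖a1 - a0‖ + (1 - r) * R) * ‖y1 - y0‖ := by
      refine h2.trans ((real_inner_le_norm _ _).trans ?_)
      gcongr
      refine (norm_add_le _ _).trans ?_
      rw [norm_smul, Real.norm_eq_abs, abs_of_nonneg (by linarith : 0 ≤ 1 - r)]
      have : 0 ≤ 1 - r := by linarith
      gcongr
    rcases (norm_nonneg (y1 - y0)).eq_or_lt with h5 | h5
    · rw [← h5]
      have : 0 ≤ 1 - r := by linarith
      positivity
    · rw [pow_two] at h4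
      exact le_of_mul_le_mul_right h4 h5
  have e2 : ‖a1 - a0‖ ≤ ‖z1 - z0‖ + (l0 - l1) * R + l1 * β1 * R + l0 * β0 * R := by
    have h1 : a1 - a0 = ((z1 - z0) - l1 • (g1 - g0)) + (l0 - l1) • g0 + (l1 * β1) • dn1
        - (l0 * β0) • dn0 := by
      rw [ha1, ha0, hd1, hd0]; module
    rw [h1]
    refine (norm_sub_le _ _).trans (add_le_add ((norm_add_le _ _).trans (add_le_add
      ((norm_add_le _ _).trans (add_le_add hg ?_)) ?_)) ?_)
    · rw [norm_smul, Real.norm_eq_abs, abs_of_nonneg (by linarith : 0 ≤ l0 - l1)]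
      have : 0 ≤ l0 - l1 := by linarith
      gcongr
    · rw [norm_smul, Real.norm_eq_abs, abs_of_nonneg (by positivity)]
      gcongr
    · rw [norm_smul, Real.norm_eq_abs, abs_of_nonneg (by positivity)]
      gcongr
  have e3 : ‖z1 - z0‖ ≤ ‖w1 - w0‖ + θ1 * R + θ0 * R := by
    have h1 : z1 - z0 = (w1 - w0) + θ1 • (w1 - w0) - θ0 • (w0 - wm) := by
      rw [hz1, hz0]; abel
    rw [h1]
    refine (norm_sub_le _ _).trans (add_le_add ((norm_add_le _ _).trans (add_le_add le_rfl ?_)) ?_)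
    · rw [norm_smul, Real.norm_eq_abs, abs_of_nonneg hθ1]
      gcongr
    · rw [norm_smul, Real.norm_eq_abs, abs_of_nonneg hθ0]
      gcongr
  have e4 : ‖w1' - w0'‖ ≤ (1 - α1) * ‖y1 - y0‖ + (α0 - α1) * R := by
    have h1 : w1' - w0' = (1 - α1) • (Ty1 - Ty0) - (α0 - α1) • (u - Ty0) := by
      rw [hw1', hw0']; module
    have h2 : 0 ≤ 1 - α1 := by linarith
    have h3 : 0 ≤ α0 - α1 := by linarith
    rw [h1]
    refine (norm_sub_le _ _).trans (add_le_add ?_ ?_)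
    · rw [norm_smul, Real.norm_eq_abs, abs_of_nonneg h2]
      gcongr
    · rw [norm_smul, Real.norm_eq_abs, abs_of_nonneg h3]
      gcongr
  set Q := θ1 * R + θ0 * R + (l0 - l1) * R + l1 * β1 * R + l0 * β0 * R + (1 - r) * R with hQ
  have hQ0 : 0 ≤ Q := by
    have : 0 ≤ l0 - l1 := by linarith
    have : 0 ≤ 1 - r := by linarith
    positivity
  have e5 : ‖y1 - y0‖ ≤ ‖w1 - w0‖ + Q := by linarith
  have e6 : (1 - α1) * ‖y1 - y0‖ ≤ (1 - α1) * (‖w1 - w0‖ + Q) := by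
    have h2 : 0 ≤ 1 - α1 := by linarith
    gcongr
  have e7 : 0 ≤ α1 * Q := by positivity
  linarith

theorem aux_weak_shift {F : Filter ℕ} {x y : ℕ → H} {p : H}
    (hx : ∀ q : H, Tendsto (fun n => @inner ℝ H _ (x n) q) F (𝓝 (@inner ℝ H _ p q)))
    (hxy : Tendsto (fun n => ‖x n - y n‖) F (𝓝 0)) (q : H) :
    Tendsto (fun n => @inner ℝ H _ (y n) q) F (𝓝 (@inner ℝ H _ p q)) := by
  have h1 : Tendsto (fun n => @inner ℝ H _ (x n - y n) q) F (𝓝 0) := by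
    refine squeeze_zero_norm (fun n => norm_inner_le_norm (𝕜 := ℝ) _ _) ?_
    simpa using hxy.mul_const ‖q‖
  have h2 := (hx q).sub h1
  rw [sub_zero] at h2
  refine h2.congr (fun n => ?_)
  rw [inner_sub_left]; ring

theorem aux_demi {T : H → H} (hT : ∀ x y : H, ‖T x - T y‖ ^ 2 ≤ @inner ℝ H _ (T x - T y) (x - y))
    {F : Filter ℕ} [F.NeBot] {y : ℕ → H} {p : H} {K : ℝ} (hK : ∀ᶠ n in F, ‖y n‖ ≤ K)
    (hy : ∀ q : H, Tendsto (fun n => @inner ℝ H _ (y n) q) F (𝓝 (@inner ℝ H _ p q)))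
    (hyT : Tendsto (fun n => ‖y n - T (y n)‖) F (𝓝 0)) : T p = p := by
  have key : ∀ n, ‖y n‖ ≤ K → 0 ≤ ‖y n - T (y n)‖ * (K + ‖p‖) + 2 * (‖p - T p‖ * ‖y n - T (y n)‖)
      - (@inner ℝ H _ (y n) (p - T p) - @inner ℝ H _ p (p - T p)) - ‖p - T p‖ ^ 2 := by
    intro n hn
    set a := y n - T (y n) with ha
    set b := p - T p with hb
    have h1 : 0 ≤ @inner ℝ H _ (a - b) (y n - p) - ‖a - b‖ ^ 2 := by
      have e1 : T (y n) - T p = (y n - p) - (a - b) := by rw [ha, hb]; abel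
      have h2 := hT (y n) p
      rw [e1, norm_sub_sq_real, inner_sub_left (y n - p), real_inner_self_eq_norm_sq,
        real_inner_comm] at h2
      linarith
    have h3 : @inner ℝ H _ a (y n - p) ≤ ‖a‖ * (K + ‖p‖) := by
      refine (real_inner_le_norm _ _).trans ?_
      gcongr
      exact (norm_sub_le _ _).trans (by linarith)
    have h4 : @inner ℝ H _ a b ≤ ‖b‖ * ‖a‖ := by
      rw [mul_comm]; exact real_inner_le_norm _ _
    rw [inner_sub_left, norm_sub_sq_real] at h1
    have h5 : @inner ℝ H _ b (y n - p) = @inner ℝ H _ (y n) b - @inner ℝ H _ p b := by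
      rw [real_inner_comm, inner_sub_left]
    have h6 : ‖a‖ ^ 2 - 2 * @inner ℝ H _ a b + ‖b‖ ^ 2 ≥ ‖b‖ ^ 2 - 2 * (‖b‖ * ‖a‖) := by
      nlinarith [sq_nonneg ‖a‖]
    linarith
  have hlim : Tendsto (fun n => ‖y n - T (y n)‖ * (K + ‖p‖) + 2 * (‖p - T p‖ * ‖y n - T (y n)‖)
      - (@inner ℝ H _ (y n) (p - T p) - @inner ℝ H _ p (p - T p)) - ‖p - T p‖ ^ 2) F
      (𝓝 (0 * (K + ‖p‖) + 2 * (‖p - T p‖ * 0)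
      - (@inner ℝ H _ p (p - T p) - @inner ℝ H _ p (p - T p)) - ‖p - T p‖ ^ 2)) :=
    (((hyT.mul_const _).add ((hyT.const_mul _).const_mul _)).sub
      ((hy (p - T p)).sub_const _)).sub_const _
  have h0 := ge_of_tendsto hlim (hK.mono key)
  have h1 : ‖p - T p‖ ^ 2 ≤ 0 := by linarith
  have h2 : ‖p - T p‖ = 0 := pow_eq_zero_iff (two_ne_zero) |>.1 (le_antisymm h1 (sq_nonneg _))
  exact (sub_eq_zero.1 (norm_eq_zero.1 h2)).symm

theorem aux_fix_mid {T : H → H} (hT : ∀ x y : H, ‖T x - T y‖ ^ 2 ≤ @inner ℝ H _ (T x - T y) (x - y))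
    {a b : H} (ha : T a = a) (hb : T b = b) :
    T ((1 / 2 : ℝ) • a + (1 / 2 : ℝ) • b) = (1 / 2 : ℝ) • a + (1 / 2 : ℝ) • b := by
  set m := (1 / 2 : ℝ) • a + (1 / 2 : ℝ) • b with hm
  have h1 := hT m a
  have h2 := hT m b
  rw [ha] at h1
  rw [hb] at h2
  rw [← real_inner_self_eq_norm_sq] at h1 h2
  have h3 : @inner ℝ H _ (T m - m) (T m - m) ≤ 0 := by
    have e1 : @inner ℝ H _ (T m - a) (T m - m) ≤ 0 := by
      have : T m - m = (T m - a) - (m - a) := by abel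
      rw [this, inner_sub_right]; linarith
    have e2 : @inner ℝ H _ (T m - b) (T m - m) ≤ 0 := by
      have : T m - m = (T m - b) - (m - b) := by abel
      rw [this, inner_sub_right]; linarith
    have e3 : T m - m = (1 / 2 : ℝ) • (T m - a) + (1 / 2 : ℝ) • (T m - b) := by
      rw [hm]; module
    have e4 : @inner ℝ H _ (T m - m) (T m - m) = (1 / 2) * @inner ℝ H _ (T m - a) (T m - m)
        + (1 / 2) * @inner ℝ H _ (T m - b) (T m - m) := by
      conv_lhs => rw [e3, inner_add_left, inner_smul_left, inner_smul_left, ← e3]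
      simp
    linarith
  rw [real_inner_self_eq_norm_sq] at h3
  have h4 := (pow_eq_zero_iff two_ne_zero).1 (le_antisymm h3 (sq_nonneg _))
  exact sub_eq_zero.1 (norm_eq_zero.1 h4)

theorem aux_firm_nonexp {T : H → H}
    (hT : ∀ x y : H, ‖T x - T y‖ ^ 2 ≤ @inner ℝ H _ (T x - T y) (x - y)) (x y : H) :
    ‖T x - T y‖ ≤ ‖x - y‖ := by
  have h1 := (hT x y).trans (real_inner_le_norm _ _)
  rcases (norm_nonneg (T x - T y)).eq_or_lt with h5 | h5
  · rw [← h5]; exact norm_nonneg _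
  · rw [pow_two] at h1
    exact le_of_mul_le_mul_left h1 h5

end steps

theorem aux_unif {M : ℕ} {g : ℕ → ℕ → ℝ} (h : ∀ i ∈ Finset.Icc 1 M, ∃ C, ∀ n ≥ 1, g n i ≤ C) :
    ∃ C, 0 ≤ C ∧ ∀ i ∈ Finset.Icc 1 M, ∀ n ≥ 1, g n i ≤ C := by
  choose! C hC using h
  refine ⟨∑ i ∈ Finset.Icc 1 M, |C i|, Finset.sum_nonneg fun i _ => abs_nonneg _, ?_⟩
  intro i hi n hn
  exact (hC i hi n hn).trans ((le_abs_self _).trans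
    (Finset.single_le_sum (f := fun i => |C i|) (fun i _ => abs_nonneg _) hi))

theorem aux_bdd_rec {r b : ℕ → ℝ} {C : ℝ} (hr : ∀ n, 0 ≤ r n) (hb : Tendsto b atTop (𝓝 0))
    (h : ∀ n ≥ 1, r (n+1) ≤ C + b n * r n) : ∃ D, ∀ n ≥ 1, r n ≤ D := by
  obtain ⟨N, hN⟩ := eventually_atTop.1 (hb.eventually_lt_const (by norm_num : (0:ℝ) < 1 / 2))
  have h1 : ∀ k, r (N + 1 + k) ≤ max (r (N + 1)) (2 * C) := by
    intro k
    induction k with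
    | zero => exact le_max_left _ _
    | succ k ih =>
      have h2 := h (N + 1 + k) (by omega)
      have h3 := hN (N + 1 + k) (by omega)
      have h4 := mul_le_mul_of_nonneg_right h3.le (hr (N + 1 + k))
      have h5 := le_max_right (r (N + 1)) (2 * C)
      rw [← add_assoc]
      linarith
  refine ⟨max (r (N + 1)) (2 * C) + ∑ i ∈ Finset.range (N + 1), r i, fun n _ => ?_⟩
  rcases le_or_gt (N + 1) n with h2 | h2
  · have h3 := h1 (n - (N + 1))
    rw [show N + 1 + (n - (N + 1)) = n by omega] at h3
    linarith [Finset.sum_nonneg (fun i (_ : i ∈ Finset.range (N + 1)) => hr i)]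
  · have h3 := Finset.single_le_sum (f := r) (fun i _ => hr i) (Finset.mem_range.2 h2)
    have h4 : 0 ≤ max (r (N + 1)) (2 * C) := (hr _).trans (le_max_left _ _)
    linarith

theorem aux_tele {A B : ℕ → ℝ} {C : ℝ} (M : ℕ) (h : ∀ i ∈ Finset.Icc 1 M, A (i+1) + B i ≤ A i + C) :
    A (M+1) + ∑ i ∈ Finset.Icc 1 M, B i ≤ A 1 + M * C := by
  induction M with
  | zero => simp
  | succ M ih =>
    rw [Finset.sum_Icc_succ_top (by omega)]
    have h1 := ih fun i hi => h i (Finset.Icc_subset_Icc_right (by omega) hi)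
    have h2 := h (M+1) (by simp)
    push_cast
    linarith

theorem aux_chain {D : ℕ → ℝ} {a E : ℝ} (ha0 : 0 ≤ a) (hD : ∀ i, 0 ≤ D i)
    (M : ℕ) (hM : 1 ≤ M) (h : ∀ i ∈ Finset.Icc 1 M, D (i+1) ≤ (1 - a) * D i + E) :
    D (M+1) ≤ (1 - a) * D 1 + M * E := by
  induction M, hM using Nat.le_induction with
  | base => simpa using h 1 (by simp)
  | succ M hM ih =>
    have h1 := ih fun i hi => h i (Finset.Icc_subset_Icc_right (by omega) hi)
    have h2 := h (M+1) (by simp)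
    have h3 : 0 ≤ a * D (M+1) := mul_nonneg ha0 (hD _)
    push_cast
    linarith

theorem aux_E {θ0 θ1 l0 l1 β0 β1 α0 α1 B σ : ℝ} (hθ : θ1 ≤ θ0) (hl1 : 0 < l1) (hl : l1 ≤ l0)
    (hB : l0 ≤ B) (hβ : β1 ≤ β0) (hβ0 : 0 ≤ β0) (hα1 : 0 < α1) (hα : α1 ≤ α0) (hσ : l0 / l1 ≤ σ) :
    θ1 + θ0 + (l0 - l1) + l1 * β1 + l0 * β0 + (1 - l1 / l0) + (α0 - α1) ≤
    α1 * l1 * (2 * (θ0 / (α1 * l1)) + (B + 1) * ((1 / α1) * |1 / l1 - 1 / l0|)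
      + (1 + σ) * (β0 / α1) + (1 / l1) * |1 - α0 / α1|) := by
  have hl0 : 0 < l0 := by linarith
  have h1 : |1 / l1 - 1 / l0| = 1 / l1 - 1 / l0 :=
    abs_of_nonneg (sub_nonneg.2 (one_div_le_one_div_of_le hl1 hl))
  have h2 : |1 - α0 / α1| = α0 / α1 - 1 := by
    rw [abs_sub_comm]
    exact abs_of_nonneg (sub_nonneg.2 ((one_le_div hα1).2 hα))
  rw [h1, h2]
  have e : α1 * l1 * (2 * (θ0 / (α1 * l1)) + (B + 1) * ((1 / α1) * (1 / l1 - 1 / l0))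
      + (1 + σ) * (β0 / α1) + (1 / l1) * (α0 / α1 - 1))
      = 2 * θ0 + (B + 1) * (1 - l1 / l0) + l1 * (1 + σ) * β0 + (α0 - α1) := by
    field_simp
  rw [e]
  have h3 : l0 ≤ σ * l1 := (div_le_iff₀ hl1).1 hσ
  have h4 : l0 * β0 ≤ σ * l1 * β0 := by gcongr
  have h5 : l1 * β1 ≤ l1 * β0 := by gcongr
  have h6 : l0 - l1 = l0 * (1 - l1 / l0) := by field_simp
  have h7 : 0 ≤ 1 - l1 / l0 := sub_nonneg.2 ((div_le_one hl0).2 hl)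
  have h8 : l0 * (1 - l1 / l0) ≤ B * (1 - l1 / l0) := by gcongr
  linarith

theorem alg1_weak_convergence_strict_convex
    {H : Type*} [NormedAddCommGroup H] [InnerProductSpace ℝ H] [CompleteSpace H]
    (M : ℕ) (hM : 1 ≤ M)
    (f h : ℕ → H → ℝ) (h' : ℕ → H → H) (L : ℕ → ℝ) (T : ℕ → H → H)
    (hf_cont : ∀ i ∈ Finset.Icc 1 M, Continuous (f i))
    (hf_conv : ∀ i ∈ Finset.Icc 1 M, ConvexOn ℝ Set.univ (f i))
    (hh_conv : ∀ i ∈ Finset.Icc 1 M, ConvexOn ℝ Set.univ (h i))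
    (hh_grad : ∀ i ∈ Finset.Icc 1 M, ∀ x : H, HasGradientAt (h i) (h' i x) x)
    (hL_pos : ∀ i ∈ Finset.Icc 1 M, 0 < L i)
    (hh_lip : ∀ i ∈ Finset.Icc 1 M, ∀ x y : H, ‖h' i x - h' i y‖ ≤ (1 / L i) * ‖x - y‖)
    (hT_firm : ∀ i ∈ Finset.Icc 1 M, ∀ x y : H,
      ‖T i x - T i y‖ ^ 2 ≤ @inner ℝ H _ (T i x - T i y) (x - y))
    (S : Set H) (hS : S = ⋂ i ∈ Finset.Icc 1 M, {x : H | T i x = x}) (hS_ne : S.Nonempty)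
    (θ lam β α : ℕ → ℝ) (σ : ℝ) (hσ : 1 ≤ σ)
    (hθ_range : ∀ n, 0 ≤ θ n ∧ θ n < 1)
    (hlam_pos : ∀ n, 0 < lam n)
    (hlam_le : ∀ n, ∀ i ∈ Finset.Icc 1 M, lam n ≤ 2 * L i)
    (hβ_range : ∀ n, 0 < β n ∧ β n ≤ 1)
    (hα_range : ∀ n, 0 < α n ∧ α n ≤ 1)
    (hθ_anti : Antitone θ) (hlam_anti : Antitone lam)
    (hβ_anti : Antitone β) (hα_anti : Antitone α)
    (hθ_lim : Tendsto θ atTop (𝓝 0)) (hlam_lim : Tendsto lam atTop (𝓝 0))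
    (hβ_lim : Tendsto β atTop (𝓝 0)) (hα_lim : Tendsto α atTop (𝓝 0))
    (hC1 : ¬ Summable α)
    (hC2 : Tendsto (fun n => (1 / α (n+1)) * |1 / lam (n+1) - 1 / lam n|) atTop (𝓝 0))
    (hC3 : Tendsto (fun n => (1 / lam (n+1)) * |1 - α n / α (n+1)|) atTop (𝓝 0))
    (hC4 : Tendsto (fun n => α n / lam n) atTop (𝓝 0))
    (hC5 : Tendsto (fun n => θ n / (α (n+1) * lam (n+1))) atTop (𝓝 0))
    (hC6 : ∀ n, lam n / lam (n+1) ≤ σ)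
    (hC7 : Tendsto (fun n => β n / α (n+1)) atTop (𝓝 0))
    (x : ℕ → H) (w z y d : ℕ → ℕ → H) (u : ℕ → H)
    (hd1 : ∀ i ∈ Finset.Icc 1 M, d 1 i = -(h' i (z 0 i)))
    (hw1 : ∀ n ≥ 1, w n 1 = x n)
    (hz : ∀ n ≥ 1, ∀ i ∈ Finset.Icc 1 M, z n i = w n i + θ n • (w n i - w (n-1) i))
    (hd : ∀ n ≥ 1, ∀ i ∈ Finset.Icc 1 M, d (n+1) i = -(h' i (z n i)) + β n • d n i)
    (hy : ∀ n ≥ 1, ∀ i ∈ Finset.Icc 1 M, ∀ v : H,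
      f i (y n i) + (1 / (2 * lam n)) * ‖z n i + lam n • d (n+1) i - y n i‖ ^ 2
        ≤ f i v + (1 / (2 * lam n)) * ‖z n i + lam n • d (n+1) i - v‖ ^ 2)
    (hw : ∀ n ≥ 1, ∀ i ∈ Finset.Icc 1 M,
      w n (i+1) = α n • u i + (1 - α n) • T i (y n i))
    (hx : ∀ n ≥ 1, x (n+1) = w n (M+1))
    (hy_bdd : ∀ i ∈ Finset.Icc 1 M, ∃ C, ∀ n ≥ 1, ‖y n i‖ ≤ C)
    (ψ : H → ℝ) (hψ : ∀ v : H, ψ v = ∑ i ∈ Finset.Icc 1 M, (f i v + h i v))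
    (hΩ_ne : ∃ p ∈ S, ∀ v ∈ S, ψ p ≤ ψ v)
    (hψ_strict : StrictConvexOn ℝ Set.univ ψ)
    : ∃ p : H, (p ∈ S ∧ ∀ v ∈ S, ψ p ≤ ψ v) ∧
      ∀ i ∈ Finset.Icc 1 M, ∀ q : H,
        Tendsto (fun n => @inner ℝ H _ (w n i) q) atTop (𝓝 (@inner ℝ H _ p q)) := by
  
  classical
  obtain ⟨p0, hp0S, hp0⟩ := hΩ_ne
  have hSmem : ∀ v, v ∈ S ↔ ∀ i ∈ Finset.Icc 1 M, T i v = v := by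
    intro v; rw [hS]; simp
  have hT_ne : ∀ i ∈ Finset.Icc 1 M, ∀ a b : H, ‖T i a - T i b‖ ≤ ‖a - b‖ :=
    fun i hi => aux_firm_nonexp (hT_firm i hi)
  have hM1 : (1:ℕ) ∈ Finset.Icc 1 M := by simp [hM]
  -- bounds
  obtain ⟨Cy, hCy0, hCy⟩ := aux_unif (g := fun n i => ‖y n i‖) hy_bdd
  obtain ⟨Cu, hCu0, hCu⟩ := aux_unif (M := M) (g := fun _ i => ‖u i‖) (fun i _ => ⟨‖u i‖, fun _ _ => le_rfl⟩)
  have hCu : ∀ i ∈ Finset.Icc 1 M, ‖u i‖ ≤ Cu := fun i hi => hCu i hi 1 le_rfl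
  have hTy : ∀ i ∈ Finset.Icc 1 M, ∀ n ≥ 1, ‖T i (y n i)‖ ≤ Cy + 2 * ‖p0‖ := by
    intro i hi n hn
    have h1 := hT_ne i hi (y n i) p0
    rw [(hSmem p0).1 hp0S i hi] at h1
    have h2 := norm_sub_le (y n i) p0
    have h3 := norm_le_norm_sub_add (T i (y n i)) p0
    linarith [hCy i hi n hn]
  have hws : ∀ i ∈ Finset.Icc 1 M, ∀ n ≥ 1, ‖w n (i+1)‖ ≤ Cu + (Cy + 2 * ‖p0‖) := by
    intro i hi n hn
    rw [hw n hn i hi]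
    refine (norm_add_le _ _).trans ?_
    obtain ⟨a0, a1⟩ := hα_range n
    have a2 : 0 ≤ 1 - α n := by linarith
    rw [norm_smul, norm_smul, Real.norm_eq_abs, Real.norm_eq_abs, abs_of_pos a0, abs_of_nonneg a2]
    have h1 : α n * ‖u i‖ ≤ 1 * Cu := by gcongr; exact hCu i hi
    have h2 : (1 - α n) * ‖T i (y n i)‖ ≤ 1 * (Cy + 2 * ‖p0‖) := by
      gcongr
      · linarith
      · exact hTy i hi n hn
    linarith
  obtain ⟨Cw, hCw0, hCw⟩ : ∃ C, 0 ≤ C ∧ ∀ i ∈ Finset.Icc 1 M, ∀ n, ‖w n i‖ ≤ C := by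
    obtain ⟨C0, hC00, hC0⟩ := aux_unif (M := M) (g := fun _ i => ‖w 0 i‖)
      (fun i _ => ⟨‖w 0 i‖, fun _ _ => le_rfl⟩)
    refine ⟨C0 + ‖x 1‖ + (Cu + (Cy + 2 * ‖p0‖)), by positivity, fun i hi n => ?_⟩
    have p1 : 0 ≤ ‖x 1‖ := norm_nonneg _
    have p2 : 0 ≤ ‖p0‖ := norm_nonneg _
    rcases Nat.eq_zero_or_pos n with rfl | hn
    · have h1 := hC0 i hi 1 le_rfl
      linarith
    · obtain ⟨hi1, hi2⟩ := Finset.mem_Icc.1 hi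
      rcases hi1.eq_or_lt with h1 | h1
      · rw [← h1, hw1 n hn]
        rcases (show 1 ≤ n from hn).eq_or_lt with h2 | h2
        · rw [← h2]; linarith
        · have h3 := hx (n - 1) (by omega)
          rw [show n - 1 + 1 = n by omega] at h3
          rw [h3]
          have h4 := hws M (by simp [hM]) (n - 1) (by omega)
          linarith
      · have h4 := hws (i - 1) (by simp; omega) n hn
        rw [show i - 1 + 1 = i by omega] at h4
        linarith
  have hCz : ∀ i ∈ Finset.Icc 1 M, ∀ n ≥ 1, ‖z n i‖ ≤ 3 * Cw := by
    intro i hi n hn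
    rw [hz n hn i hi]
    refine (norm_add_le _ _).trans ?_
    rw [norm_smul, Real.norm_eq_abs, abs_of_nonneg (hθ_range n).1]
    have h1 : θ n * ‖w n i - w (n-1) i‖ ≤ 1 * (Cw + Cw) := by
      have h2 : ‖w n i - w (n-1) i‖ ≤ Cw + Cw :=
        (norm_sub_le _ _).trans (add_le_add (hCw i hi n) (hCw i hi (n-1)))
      have := (hθ_range n).2.le
      gcongr
    linarith [hCw i hi n]
  obtain ⟨Cg, hCg0, hCg⟩ : ∃ C, 0 ≤ C ∧ ∀ i ∈ Finset.Icc 1 M, ∀ n ≥ 1, ‖h' i (z n i)‖ ≤ C := by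
    refine aux_unif (g := fun n i => ‖h' i (z n i)‖) fun i hi => ?_
    refine ⟨(1 / L i) * (3 * Cw) + ‖h' i 0‖, fun n hn => ?_⟩
    have h1 := hh_lip i hi (z n i) 0
    rw [sub_zero] at h1
    have h2 : (1 / L i) * ‖z n i‖ ≤ (1 / L i) * (3 * Cw) := by
      have := hL_pos i hi
      gcongr
      exact hCz i hi n hn
    have h3 := norm_le_norm_sub_add (h' i (z n i)) (h' i 0)
    linarith
  obtain ⟨Cd, hCd0, hCd⟩ : ∃ C, 0 ≤ C ∧ ∀ i ∈ Finset.Icc 1 M, ∀ n ≥ 1, ‖d n i‖ ≤ C := by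
    refine aux_unif (g := fun n i => ‖d n i‖) fun i hi => ?_
    refine aux_bdd_rec (r := fun n => ‖d n i‖) (b := β) (C := Cg) (fun n => norm_nonneg _) hβ_lim ?_
    intro n hn
    rw [hd n hn i hi]
    refine (norm_add_le _ _).trans ?_
    rw [norm_neg, norm_smul, Real.norm_eq_abs, abs_of_pos (hβ_range n).1]
    linarith [hCg i hi n hn]
  have hlam0 : ∀ n, lam n ≤ lam 0 := fun n => hlam_anti (Nat.zero_le n)
  have hprox : ∀ n ≥ 1, ∀ i ∈ Finset.Icc 1 M, ∀ v : H,
      @inner ℝ H _ (z n i + lam n • d (n+1) i - y n i) (v - y n i) ≤ lam n * (f i v - f i (y n i)) :=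
    fun n hn i hi v => aux_prox (hf_conv i hi) (hlam_pos n) (hy n hn i hi) v
  -- differences
  obtain ⟨R, hR0, hR⟩ : ∃ R, 0 ≤ R ∧ R = 5 * Cw + Cg + Cd + lam 0 * Cd + Cy + Cu + (Cy + 2 * ‖p0‖) :=
    ⟨_, by have := (hlam_pos 0).le; positivity, rfl⟩
  have pos1 : 0 ≤ lam 0 * Cd := mul_nonneg (hlam_pos 0).le hCd0
  have pos2 : 0 ≤ ‖p0‖ := norm_nonneg _
  have hww : ∀ i ∈ Finset.Icc 1 M, ∀ n m, ‖w n i - w m i‖ ≤ 2 * Cw := by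
    intro i hi n m
    refine (norm_sub_le _ _).trans ?_
    linarith [hCw i hi n, hCw i hi m]
  have hstep : ∀ n ≥ 1, ∀ i ∈ Finset.Icc 1 M, ‖w (n+1) (i+1) - w n (i+1)‖ ≤
      (1 - α (n+1)) * ‖w (n+1) i - w n i‖ + R * (θ (n+1) + θ n + (lam n - lam (n+1))
        + lam (n+1) * β (n+1) + lam n * β n + (1 - lam (n+1) / lam n) + (α n - α (n+1))) := by
    intro n hn i hi
    have hn1 : n + 1 ≥ 1 := by omega
    have hz1 := hz (n+1) hn1 i hi
    rw [Nat.add_sub_cancel] at hz1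
    refine aux_step_diff (hlam_pos (n+1)) (hlam_anti (Nat.le_succ n)) (hθ_range n).1
      (hθ_range (n+1)).1 (hα_range (n+1)).1 (hα_range (n+1)).2 (hα_anti (Nat.le_succ n))
      (hβ_range n).1.le (hβ_range (n+1)).1.le (hz n hn i hi) hz1 (hd n hn i hi)
      (hd (n+1) hn1 i hi) (hprox n hn i hi (y (n+1) i)) (hprox (n+1) hn1 i hi (y n i))
      (aux_nonexp (hL_pos i hi) (hh_conv i hi) (hh_grad i hi) (hh_lip i hi) (hlam_pos (n+1))
        (hlam_le (n+1) i hi) _ _) (hT_ne i hi _ _) (hw n hn i hi) (hw (n+1) hn1 i hi)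
      ?_ ?_ ?_ ?_ ?_ ?_ ?_
    · linarith [hww i hi n (n-1)]
    · linarith [hww i hi (n+1) n]
    · linarith [hCg i hi n hn]
    · linarith [hCd i hi n hn]
    · linarith [hCd i hi (n+1) hn1]
    · refine (norm_sub_le _ _).trans ?_
      have h1 := norm_add_le (z n i) (lam n • d (n+1) i)
      rw [norm_smul, Real.norm_eq_abs, abs_of_pos (hlam_pos n)] at h1
      have h2 : lam n * ‖d (n+1) i‖ ≤ lam 0 * Cd := by
        have h3 := hlam0 n
        have h4 := hCd i hi (n+1) hn1
        have := (hlam_pos 0).le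
        gcongr
      linarith [hCy i hi n hn, hCz i hi n hn]
    · refine (norm_sub_le _ _).trans ?_
      linarith [hCu i hi, hTy i hi n hn]
  obtain ⟨ρ, hρ⟩ : ∃ ρ : ℕ → ℝ, ρ = fun n => (2 * (θ n / (α (n+1) * lam (n+1)))
      + (lam 0 + 1) * ((1 / α (n+1)) * |1 / lam (n+1) - 1 / lam n|)
      + (1 + σ) * (β n / α (n+1)) + (1 / lam (n+1)) * |1 - α n / α (n+1)|) := ⟨_, rfl⟩
  have hρlim : Tendsto ρ atTop (𝓝 0) := by
    rw [hρ]
    simpa using (((hC5.const_mul 2).add (hC2.const_mul (lam 0 + 1))).add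
      (hC7.const_mul (1 + σ))).add hC3
  have hstep2 : ∀ n ≥ 1, ‖x (n+1+1) - x (n+1)‖ ≤ (1 - α (n+1)) * ‖x (n+1) - x n‖
      + M * (R * (α (n+1) * lam (n+1) * ρ n)) := by
    intro n hn
    have h1 := aux_chain (D := fun i => ‖w (n+1) i - w n i‖) (a := α (n+1))
      (E := R * (α (n+1) * lam (n+1) * ρ n)) (hα_range (n+1)).1.le (fun i => norm_nonneg _) M hM (by
        intro i hi
        refine (hstep n hn i hi).trans ?_
        gcongr
        rw [hρ]
        exact aux_E (hθ_anti (Nat.le_succ n)) (hlam_pos (n+1)) (hlam_anti (Nat.le_succ n)) (hlam0 n)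
          (hβ_anti (Nat.le_succ n)) (hβ_range n).1.le (hα_range (n+1)).1 (hα_anti (Nat.le_succ n))
          (hC6 n))
    rw [← hx (n+1) (by omega), ← hx n hn, hw1 (n+1) (by omega), hw1 n hn] at h1
    exact h1
  have hxb : ∀ n ≥ 1, ‖x n‖ ≤ Cw := by
    intro n hn
    rw [← hw1 n hn]; exact hCw 1 hM1 n
  have hadiff : Tendsto (fun n => ‖x (n+1) - x n‖ / lam n) atTop (𝓝 0) := by
    refine aux_xu _ (fun n => α (n+1)) (fun n => (2 * Cw) * ((1 / α (n+1)) * |1 / lam (n+1) - 1 / lam n|)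
      + M * R * ρ n) (fun n => div_nonneg (norm_nonneg _) (hlam_pos n).le)
      (fun n => (hα_range (n+1)).1) (fun n => (hα_range (n+1)).2) ?_ ?_ ?_
    · rwa [summable_nat_add_iff 1]
    · simpa using (hC2.const_mul (2 * Cw)).add (hρlim.const_mul (M * R))
    · filter_upwards [eventually_ge_atTop 1] with n hn
      have h1 := hstep2 n hn
      have l1 := hlam_pos (n+1)
      have l0 := hlam_pos n
      obtain ⟨a0, a1⟩ := hα_range (n+1)
      set D := ‖x (n+1) - x n‖ with hD
      have hDb : D ≤ 2 * Cw := by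
        refine (norm_sub_le _ _).trans ?_
        linarith [hxb n hn, hxb (n+1) (by omega)]
      have hD0 : 0 ≤ D := norm_nonneg _
      have h2 : ‖x (n+1+1) - x (n+1)‖ / lam (n+1) ≤ (1 - α (n+1)) * (D / lam (n+1))
          + M * R * α (n+1) * ρ n := by
        rw [div_le_iff₀ l1]
        refine h1.trans (le_of_eq ?_)
        field_simp
      have h3 : D / lam (n+1) ≤ D / lam n + 2 * Cw * |1 / lam (n+1) - 1 / lam n| := by
        have h4 : D / lam (n+1) = D / lam n + D * (1 / lam (n+1) - 1 / lam n) := by ring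
        rw [h4]
        have h9 : D * (1 / lam (n+1) - 1 / lam n) ≤ D * |1 / lam (n+1) - 1 / lam n| :=
          mul_le_mul_of_nonneg_left (le_abs_self _) hD0
        have h10 : D * |1 / lam (n+1) - 1 / lam n| ≤ 2 * Cw * |1 / lam (n+1) - 1 / lam n| :=
          mul_le_mul_of_nonneg_right hDb (abs_nonneg _)
        linarith
      have h5 : (1 - α (n+1)) * (D / lam (n+1)) ≤ (1 - α (n+1)) * (D / lam n)
          + 2 * Cw * |1 / lam (n+1) - 1 / lam n| := by
        have h6 : (1 - α (n+1)) * (D / lam (n+1)) ≤ (1 - α (n+1)) *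
            (D / lam n + 2 * Cw * |1 / lam (n+1) - 1 / lam n|) :=
          mul_le_mul_of_nonneg_left h3 (by linarith)
        have h7 : 0 ≤ α (n+1) * (2 * Cw * |1 / lam (n+1) - 1 / lam n|) := by positivity
        linarith
      have h8 : α (n+1) * ((2 * Cw) * ((1 / α (n+1)) * |1 / lam (n+1) - 1 / lam n|)
          + M * R * ρ n) = 2 * Cw * |1 / lam (n+1) - 1 / lam n| + M * R * α (n+1) * ρ n := by
        field_simp
      rw [h8]
      linarith
  -- main inequality
  have hmain : ∀ v ∈ S, ∃ η : ℕ → ℝ, Tendsto η atTop (𝓝 0) ∧ ∀ n ≥ 1,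
      ∑ i ∈ Finset.Icc 1 M, (‖z n i - y n i‖ ^ 2 + ‖y n i - T i (y n i)‖ ^ 2)
      + 2 * lam n * ∑ i ∈ Finset.Icc 1 M, (f i (y n i) - f i v
        + @inner ℝ H _ (h' i (z n i)) (y n i - v)) ≤ lam n * η n := by
    intro v hv
    obtain ⟨Q, hQ⟩ : ∃ Q, Q = R + ‖v‖ := ⟨_, rfl⟩
    have pv : 0 ≤ ‖v‖ := norm_nonneg _
    refine ⟨fun n => 2 * Q * (‖x (n+1) - x n‖ / lam n)
      + M * Q ^ 2 * (3 * (θ n / lam n) + α n / lam n + 2 * β n), ?_, ?_⟩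
    · have hθl : Tendsto (fun n => θ n / lam n) atTop (𝓝 0) := by
        refine squeeze_zero (fun n => div_nonneg (hθ_range n).1 (hlam_pos n).le) (fun n => ?_) hC5
        have l1 := hlam_pos (n+1)
        obtain ⟨a0, a1⟩ := hα_range (n+1)
        refine div_le_div_of_nonneg_left (hθ_range n).1 (by positivity) ?_
        have h1 : α (n+1) * lam (n+1) ≤ 1 * lam (n+1) := by gcongr
        linarith [hlam_anti (Nat.le_succ n)]
      have := (hadiff.const_mul (2 * Q)).add ((((hθl.const_mul 3).add hC4).add
        (hβ_lim.const_mul 2)).const_mul (M * Q ^ 2))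
      simpa using this
    · intro n hn
      have h1 := aux_tele (A := fun i => ‖w n i - v‖ ^ 2)
        (B := fun i => (‖z n i - y n i‖ ^ 2 + ‖y n i - T i (y n i)‖ ^ 2 + 2 * lam n *
          (f i (y n i) - f i v + @inner ℝ H _ (h' i (z n i)) (y n i - v))))
        (C := Q ^ 2 * (3 * θ n + α n + 2 * lam n * β n)) M (by
          intro i hi
          have hTv := hT_firm i hi (y n i) v
          rw [(hSmem v).1 hv i hi] at hTv
          refine aux_step_v (hlam_pos n) (hθ_range n).1 (hθ_range n).2.le (hα_range n).1
            (hα_range n).2 (hβ_range n).1.le (hz n hn i hi) (hd n hn i hi) (hprox n hn i hi v) hTv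
            (hw n hn i hi) ?_ ?_ ?_ ?_ ?_
          · linarith [hww i hi n (n-1)]
          · linarith [norm_sub_le (w n i) v, hCw i hi n]
          · linarith [norm_sub_le (y n i) v, hCy i hi n hn]
          · linarith [norm_sub_le (u i) v, hCu i hi]
          · linarith [hCd i hi n hn])
      rw [← hx n hn, hw1 n hn, Finset.sum_add_distrib, ← Finset.mul_sum] at h1
      have h2 : ‖x n - v‖ ^ 2 - ‖x (n+1) - v‖ ^ 2 ≤ 2 * Q * ‖x (n+1) - x n‖ := by
        have h3 : ‖x n - v‖ - ‖x (n+1) - v‖ ≤ ‖x (n+1) - x n‖ := by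
          have := norm_sub_norm_le (x n - v) (x (n+1) - v)
          rw [sub_sub_sub_cancel_right, norm_sub_rev (x n) (x (n+1))] at this
          exact this
        have h4 : ‖x n - v‖ ≤ Q := by linarith [norm_sub_le (x n) v, hxb n hn]
        have h5 : ‖x (n+1) - v‖ ≤ Q := by linarith [norm_sub_le (x (n+1)) v, hxb (n+1) (by omega)]
        have h6 : (‖x n - v‖ - ‖x (n+1) - v‖) * (‖x n - v‖ + ‖x (n+1) - v‖) ≤
            ‖x (n+1) - x n‖ * (‖x n - v‖ + ‖x (n+1) - v‖) :=
          mul_le_mul_of_nonneg_right h3 (by positivity)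
        have h7 : ‖x (n+1) - x n‖ * (‖x n - v‖ + ‖x (n+1) - v‖) ≤ ‖x (n+1) - x n‖ * (2 * Q) :=
          mul_le_mul_of_nonneg_left (by linarith) (norm_nonneg _)
        linarith
      have h8 : lam n * (2 * Q * (‖x (n+1) - x n‖ / lam n)
          + M * Q ^ 2 * (3 * (θ n / lam n) + α n / lam n + 2 * β n))
          = 2 * Q * ‖x (n+1) - x n‖ + M * (Q ^ 2 * (3 * θ n + α n + 2 * lam n * β n)) := by
        have := hlam_pos n
        field_simp
      rw [h8]
      linarith
  -- asymptotic regularity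
  have hreg : Tendsto (fun n => ∑ i ∈ Finset.Icc 1 M,
      (‖z n i - y n i‖ ^ 2 + ‖y n i - T i (y n i)‖ ^ 2)) atTop (𝓝 0) := by
    obtain ⟨η, hη, hle⟩ := hmain p0 hp0S
    have hmin : ∀ i ∈ Finset.Icc 1 M, ∃ g : H, ∀ v,
        f i p0 - 1 + @inner ℝ H _ g (v - p0) ≤ f i v :=
      fun i hi => aux_minorant (hf_cont i hi) (hf_conv i hi) p0 one_pos
    choose! g hg using hmin
    have hlow : ∀ n ≥ 1, ∑ i ∈ Finset.Icc 1 M, -(1 + ‖g i‖ * (Cy + ‖p0‖) + Cg * (Cy + ‖p0‖)) ≤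
        ∑ i ∈ Finset.Icc 1 M, (f i (y n i) - f i p0
        + @inner ℝ H _ (h' i (z n i)) (y n i - p0)) := by
      intro n hn
      refine Finset.sum_le_sum fun i hi => ?_
      have h1 := hg i hi (y n i)
      have h2 : ‖y n i - p0‖ ≤ Cy + ‖p0‖ := by
        linarith [norm_sub_le (y n i) p0, hCy i hi n hn]
      have h3 : |@inner ℝ H _ (g i) (y n i - p0)| ≤ ‖g i‖ * (Cy + ‖p0‖) :=
        (abs_real_inner_le_norm _ _).trans (by gcongr)
      have h4 : |@inner ℝ H _ (h' i (z n i)) (y n i - p0)| ≤ Cg * (Cy + ‖p0‖) :=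
        (abs_real_inner_le_norm _ _).trans (by gcongr; exact hCg i hi n hn)
      linarith [neg_abs_le (@inner ℝ H _ (g i) (y n i - p0)),
        neg_abs_le (@inner ℝ H _ (h' i (z n i)) (y n i - p0))]
    set B := ∑ i ∈ Finset.Icc 1 M, -(1 + ‖g i‖ * (Cy + ‖p0‖) + Cg * (Cy + ‖p0‖)) with hB
    have hlim : Tendsto (fun n => lam n * η n - 2 * lam n * B) atTop (𝓝 0) := by
      simpa using (hlam_lim.mul hη).sub ((hlam_lim.const_mul 2).mul_const B)
    refine squeeze_zero' (Eventually.of_forall fun n => Finset.sum_nonneg fun i _ => by positivity)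
      ?_ hlim
    filter_upwards [eventually_ge_atTop 1] with n hn
    have h1 := hle n hn
    have h2 := mul_le_mul_of_nonneg_left (hlow n hn) (by linarith [hlam_pos n] : 0 ≤ 2 * lam n)
    linarith
  have hzy : ∀ i ∈ Finset.Icc 1 M, Tendsto (fun n => ‖z n i - y n i‖) atTop (𝓝 0) := by
    intro i hi
    have h1 : Tendsto (fun n => ‖z n i - y n i‖ ^ 2) atTop (𝓝 0) := by
      refine squeeze_zero (fun n => sq_nonneg _) (fun n => ?_) hreg
      have := Finset.single_le_sum (f := fun i => ‖z n i - y n i‖ ^ 2 + ‖y n i - T i (y n i)‖ ^ 2)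
        (fun i _ => by positivity) hi
      have h2 := sq_nonneg ‖y n i - T i (y n i)‖
      linarith
    have h3 := h1.sqrt
    simpa using h3
  have hyT : ∀ i ∈ Finset.Icc 1 M, Tendsto (fun n => ‖y n i - T i (y n i)‖) atTop (𝓝 0) := by
    intro i hi
    have h1 : Tendsto (fun n => ‖y n i - T i (y n i)‖ ^ 2) atTop (𝓝 0) := by
      refine squeeze_zero (fun n => sq_nonneg _) (fun n => ?_) hreg
      have := Finset.single_le_sum (f := fun i => ‖z n i - y n i‖ ^ 2 + ‖y n i - T i (y n i)‖ ^ 2)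
        (fun i _ => by positivity) hi
      have h2 := sq_nonneg ‖z n i - y n i‖
      linarith
    have h3 := h1.sqrt
    simpa using h3
  have hwz : ∀ i ∈ Finset.Icc 1 M, Tendsto (fun n => ‖w n i - z n i‖) atTop (𝓝 0) := by
    intro i hi
    have hl : Tendsto (fun n => θ n * (2 * Cw)) atTop (𝓝 0) := by
      simpa using hθ_lim.mul_const (2 * Cw)
    refine squeeze_zero' (Eventually.of_forall fun n => norm_nonneg _) ?_ hl
    filter_upwards [eventually_ge_atTop 1] with n hn
    rw [hz n hn i hi, sub_add_cancel_left, norm_neg, norm_smul, Real.norm_eq_abs,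
      abs_of_nonneg (hθ_range n).1]
    exact mul_le_mul_of_nonneg_left (hww i hi n (n-1)) (hθ_range n).1
  have hww' : ∀ i ∈ Finset.Icc 1 M, Tendsto (fun n => ‖T i (y n i) - w n (i+1)‖) atTop (𝓝 0) := by
    intro i hi
    have hl : Tendsto (fun n => α n * R) atTop (𝓝 0) := by
      simpa using hα_lim.mul_const R
    refine squeeze_zero' (Eventually.of_forall fun n => norm_nonneg _) ?_ hl
    filter_upwards [eventually_ge_atTop 1] with n hn
    have e1 : T i (y n i) - w n (i+1) = α n • (T i (y n i) - u i) := by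
      rw [hw n hn i hi]; module
    rw [e1, norm_smul, Real.norm_eq_abs, abs_of_pos (hα_range n).1]
    refine mul_le_mul_of_nonneg_left ?_ (hα_range n).1.le
    refine (norm_sub_le _ _).trans ?_
    linarith [hCu i hi, hTy i hi n hn]
  -- uniqueness
  have huniq : ∀ p, p ∈ S → (∀ v ∈ S, ψ p ≤ ψ v) → p = p0 := by
    intro p hpS hp
    by_contra hne
    have hmid : (1 / 2 : ℝ) • p + (1 / 2 : ℝ) • p0 ∈ S :=
      (hSmem _).2 fun i hi => aux_fix_mid (hT_firm i hi) ((hSmem p).1 hpS i hi)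
        ((hSmem p0).1 hp0S i hi)
    have h1 := hψ_strict.2 (Set.mem_univ p) (Set.mem_univ p0) hne (by norm_num : (0:ℝ) < 1 / 2)
      (by norm_num : (0:ℝ) < 1 / 2) (by norm_num)
    simp only [smul_eq_mul] at h1
    linarith [hp _ hmid, hp0 _ hmid]
  refine ⟨p0, ⟨hp0S, hp0⟩, ?_⟩
  -- weak convergence along every ultrafilter
  have hU : ∀ U : Ultrafilter ℕ, (U : Filter ℕ) ≤ atTop → ∀ i ∈ Finset.Icc 1 M, ∀ q : H,
      Tendsto (fun n => @inner ℝ H _ (w n i) q) (U : Filter ℕ) (𝓝 (@inner ℝ H _ p0 q)) := by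
    intro U hUtop
    obtain ⟨p, hp⟩ := aux_weak U (fun n => w n 1) Cw (Eventually.of_forall (hCw 1 hM1))
    have hstepU : ∀ i ∈ Finset.Icc 1 M, (∀ q : H, Tendsto (fun n => @inner ℝ H _ (w n i) q)
        (U : Filter ℕ) (𝓝 (@inner ℝ H _ p q))) →
        (∀ q : H, Tendsto (fun n => @inner ℝ H _ (z n i) q) (U : Filter ℕ) (𝓝 (@inner ℝ H _ p q))) ∧
        (∀ q : H, Tendsto (fun n => @inner ℝ H _ (y n i) q) (U : Filter ℕ) (𝓝 (@inner ℝ H _ p q))) ∧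
        (∀ q : H, Tendsto (fun n => @inner ℝ H _ (w n (i+1)) q) (U : Filter ℕ)
          (𝓝 (@inner ℝ H _ p q))) := by
      intro i hi hwi
      have h1 := aux_weak_shift hwi ((hwz i hi).mono_left hUtop)
      have h2 := aux_weak_shift h1 ((hzy i hi).mono_left hUtop)
      have h3 := aux_weak_shift h2 ((hyT i hi).mono_left hUtop)
      exact ⟨h1, h2, aux_weak_shift h3 ((hww' i hi).mono_left hUtop)⟩
    have hwU : ∀ i, 1 ≤ i → i ≤ M → ∀ q : H, Tendsto (fun n => @inner ℝ H _ (w n i) q)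
        (U : Filter ℕ) (𝓝 (@inner ℝ H _ p q)) := by
      intro i hi
      induction i, hi using Nat.le_induction with
      | base => intro _; exact hp
      | succ i hi ih =>
        intro hiM
        exact (hstepU i (Finset.mem_Icc.2 ⟨hi, by omega⟩) (ih (by omega))).2.2
    have hzU := fun i (hi : i ∈ Finset.Icc 1 M) =>
      (hstepU i hi (hwU i (Finset.mem_Icc.1 hi).1 (Finset.mem_Icc.1 hi).2)).1
    have hyU := fun i (hi : i ∈ Finset.Icc 1 M) =>
      (hstepU i hi (hwU i (Finset.mem_Icc.1 hi).1 (Finset.mem_Icc.1 hi).2)).2.1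
    have hge1 : ∀ᶠ n in (U : Filter ℕ), 1 ≤ n := hUtop (eventually_ge_atTop 1)
    have hpS : p ∈ S := (hSmem p).2 fun i hi => aux_demi (hT_firm i hi)
      (hge1.mono fun n hn => hCy i hi n hn) (hyU i hi) ((hyT i hi).mono_left hUtop)
    have hpmin : ∀ v ∈ S, ψ p ≤ ψ v := by
      intro v hv
      refine le_of_forall_pos_le_add fun e he => ?_
      obtain ⟨η, hη, hle⟩ := hmain v hv
      have hMpos : (0:ℝ) < M := by exact_mod_cast hM
      have hmin : ∀ i ∈ Finset.Icc 1 M, ∃ g : H, ∀ v,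
          f i p - e / M + @inner ℝ H _ g (v - p) ≤ f i v :=
        fun i hi => aux_minorant (hf_cont i hi) (hf_conv i hi) p (by positivity)
      choose! g hg using hmin
      have hbound : ∀ n ≥ 1, ψ p ≤ ψ v + e + η n / 2
          - ∑ i ∈ Finset.Icc 1 M, ((@inner ℝ H _ (y n i) (g i) - @inner ℝ H _ p (g i))
            + (@inner ℝ H _ (z n i) (h' i p) - @inner ℝ H _ p (h' i p))
            - Cg * ‖z n i - y n i‖) := by
        intro n hn
        have h1 := hle n hn
        have h2 : 0 ≤ ∑ i ∈ Finset.Icc 1 M, (‖z n i - y n i‖ ^ 2 + ‖y n i - T i (y n i)‖ ^ 2) :=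
          Finset.sum_nonneg fun i _ => by positivity
        have h3 : ∑ i ∈ Finset.Icc 1 M, (f i (y n i) - f i v
            + @inner ℝ H _ (h' i (z n i)) (y n i - v)) ≤ η n / 2 := by
          refine le_of_mul_le_mul_left ?_ (hlam_pos n)
          linarith
        have h4 : ∑ i ∈ Finset.Icc 1 M, ((f i p + h i p) - (f i v + h i v) - e / M
            + ((@inner ℝ H _ (y n i) (g i) - @inner ℝ H _ p (g i))
            + (@inner ℝ H _ (z n i) (h' i p) - @inner ℝ H _ p (h' i p))
            - Cg * ‖z n i - y n i‖)) ≤ ∑ i ∈ Finset.Icc 1 M, (f i (y n i) - f i v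
            + @inner ℝ H _ (h' i (z n i)) (y n i - v)) := by
          refine Finset.sum_le_sum fun i hi => ?_
          have k1 := hg i hi (y n i)
          have k2 := aux_grad (hh_conv i hi) (hh_grad i hi) p (z n i)
          have k3 := aux_grad (hh_conv i hi) (hh_grad i hi) (z n i) v
          have k4 : @inner ℝ H _ (h' i (z n i)) (z n i - y n i) ≤ Cg * ‖z n i - y n i‖ :=
            (real_inner_le_norm _ _).trans
              (mul_le_mul_of_nonneg_right (hCg i hi n hn) (norm_nonneg _))
          rw [real_inner_comm, inner_sub_left] at k1 k2
          have k5 : @inner ℝ H _ (h' i (z n i)) (y n i - v) =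
              - @inner ℝ H _ (h' i (z n i)) (v - z n i)
              - @inner ℝ H _ (h' i (z n i)) (z n i - y n i) := by
            rw [← inner_neg_right, ← inner_sub_right]; congr 1; abel
          linarith
        rw [Finset.sum_add_distrib, Finset.sum_sub_distrib, Finset.sum_sub_distrib, ← hψ, ← hψ,
          Finset.sum_const, Nat.card_Icc, Nat.add_sub_cancel, nsmul_eq_mul,
          mul_div_cancel₀ _ hMpos.ne'] at h4
        linarith
      have hlim : Tendsto (fun n => ψ v + e + η n / 2
          - ∑ i ∈ Finset.Icc 1 M, ((@inner ℝ H _ (y n i) (g i) - @inner ℝ H _ p (g i))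
            + (@inner ℝ H _ (z n i) (h' i p) - @inner ℝ H _ p (h' i p))
            - Cg * ‖z n i - y n i‖)) (U : Filter ℕ) (𝓝 (ψ v + e + 0 / 2
          - ∑ i ∈ Finset.Icc 1 M, ((@inner ℝ H _ p (g i) - @inner ℝ H _ p (g i))
            + (@inner ℝ H _ p (h' i p) - @inner ℝ H _ p (h' i p))
            - Cg * 0))) := by
        refine Tendsto.sub (((hη.mono_left hUtop).div_const 2).const_add _) ?_
        refine tendsto_finsetSum _ fun i hi => ?_
        exact (((hyU i hi (g i)).sub_const _).add ((hzU i hi (h' i p)).sub_const _)).sub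
          (((hzy i hi).mono_left hUtop).const_mul Cg)
      have := ge_of_tendsto hlim (hge1.mono hbound)
      simpa using this
    have hpp := huniq p hpS hpmin
    subst hpp
    intro i hi
    exact hwU i (Finset.mem_Icc.1 hi).1 (Finset.mem_Icc.1 hi).2
  intro i hi q
  rw [tendsto_iff_ultrafilter]
  exact fun U hUtop => hU U hUtop i hi q
end

section
/- The sequences {T_i(y_n^{(i)})} (i ∈ I), {x_n}, {w_n^{(i)}} (i ∈ I), {z_n} and {d_n^{(i)}} (i ∈ I) generated by Algorithm 2 are all bounded. -/
open Filter Topology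

theorem bdd_aux (a b : ℕ → ℝ) (G : ℝ) (hG : 0 ≤ G) (ha : ∀ n, 0 ≤ a n)
    (hb : Tendsto b atTop (𝓝 0))
    (hr : ∀ n ≥ 1, a (n+1) ≤ G + b n * a n) : ∃ C, ∀ n ≥ 1, a n ≤ C := by
  obtain ⟨N, hN⟩ := eventually_atTop.1 (hb.eventually (gt_mem_nhds (show (0:ℝ) < 1/2 by norm_num)))
  have hs : ∀ m ≤ N + 1, a m ≤ ∑ j ∈ Finset.range (N+2), a j := fun m hm =>
    Finset.single_le_sum (f := a) (fun j _ => ha j) (Finset.mem_range.2 (by omega))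
  refine ⟨2 * G + ∑ j ∈ Finset.range (N+2), a j, fun n _ => ?_⟩
  induction n with
  | zero => have := hs 0 (by omega); linarith
  | succ k ih =>
    by_cases hk : k + 1 ≤ N + 1
    · have := hs _ hk; linarith
    · have h1 := ih (by omega)
      have h2 := hr k (by omega)
      have h3 := hN k (by omega)
      have h4 : b k * a k ≤ 1/2 * a k := mul_le_mul_of_nonneg_right h3.le (ha k)
      have h5 := hs 0 (by omega)
      have h6 := ha 0
      linarith

theorem alg2_sequences_bounded
    {H : Type*} [NormedAddCommGroup H] [InnerProductSpace ℝ H] [CompleteSpace H]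
    (M : ℕ) (hM : 1 ≤ M)
    (f h : ℕ → H → ℝ) (h' : ℕ → H → H) (L : ℕ → ℝ) (T : ℕ → H → H)
    (hf_cont : ∀ i ∈ Finset.Icc 1 M, Continuous (f i))
    (hf_conv : ∀ i ∈ Finset.Icc 1 M, ConvexOn ℝ Set.univ (f i))
    (hh_conv : ∀ i ∈ Finset.Icc 1 M, ConvexOn ℝ Set.univ (h i))
    (hh_grad : ∀ i ∈ Finset.Icc 1 M, ∀ x : H, HasGradientAt (h i) (h' i x) x)
    (hL_pos : ∀ i ∈ Finset.Icc 1 M, 0 < L i)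
    (hh_lip : ∀ i ∈ Finset.Icc 1 M, ∀ x y : H, ‖h' i x - h' i y‖ ≤ (1 / L i) * ‖x - y‖)
    (hT_firm : ∀ i ∈ Finset.Icc 1 M, ∀ x y : H,
      ‖T i x - T i y‖ ^ 2 ≤ @inner ℝ H _ (T i x - T i y) (x - y))
    (S : Set H) (hS : S = ⋂ i ∈ Finset.Icc 1 M, {x : H | T i x = x}) (hS_ne : S.Nonempty)
    (θ lam β α : ℕ → ℝ) (σ : ℝ) (hσ : 1 ≤ σ)
    (hθ_range : ∀ n, 0 ≤ θ n ∧ θ n < 1)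
    (hlam_pos : ∀ n, 0 < lam n)
    (hlam_le : ∀ n, ∀ i ∈ Finset.Icc 1 M, lam n ≤ 2 * L i)
    (hβ_range : ∀ n, 0 < β n ∧ β n ≤ 1)
    (hα_range : ∀ n, 0 < α n ∧ α n ≤ 1)
    (hθ_anti : Antitone θ) (hlam_anti : Antitone lam)
    (hβ_anti : Antitone β) (hα_anti : Antitone α)
    (hθ_lim : Tendsto θ atTop (𝓝 0)) (hlam_lim : Tendsto lam atTop (𝓝 0))
    (hβ_lim : Tendsto β atTop (𝓝 0)) (hα_lim : Tendsto α atTop (𝓝 0))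
    (hC1 : ¬ Summable α)
    (hC2 : Tendsto (fun n => (1 / α (n+1)) * |1 / lam (n+1) - 1 / lam n|) atTop (𝓝 0))
    (hC3 : Tendsto (fun n => (1 / lam (n+1)) * |1 - α n / α (n+1)|) atTop (𝓝 0))
    (hC4 : Tendsto (fun n => α n / lam n) atTop (𝓝 0))
    (hC5 : Tendsto (fun n => θ n / (α (n+1) * lam (n+1))) atTop (𝓝 0))
    (hC6 : ∀ n, lam n / lam (n+1) ≤ σ)
    (hC7 : Tendsto (fun n => β n / α (n+1)) atTop (𝓝 0))
    (x z : ℕ → H) (w y d : ℕ → ℕ → H) (u : ℕ → H)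
    (hd1 : ∀ i ∈ Finset.Icc 1 M, d 1 i = -(h' i (z 0)))
    (hz : ∀ n ≥ 1, z n = x n + θ n • (x n - x (n-1)))
    (hd : ∀ n ≥ 1, ∀ i ∈ Finset.Icc 1 M, d (n+1) i = -(h' i (z n)) + β n • d n i)
    (hy : ∀ n ≥ 1, ∀ i ∈ Finset.Icc 1 M, ∀ v : H,
      f i (y n i) + (1 / (2 * lam n)) * ‖z n + lam n • d (n+1) i - y n i‖ ^ 2
        ≤ f i v + (1 / (2 * lam n)) * ‖z n + lam n • d (n+1) i - v‖ ^ 2)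
    (hw : ∀ n ≥ 1, ∀ i ∈ Finset.Icc 1 M,
      w n (i+1) = α n • u i + (1 - α n) • T i (y n i))
    (hx : ∀ n ≥ 1, x (n+1) = (M : ℝ)⁻¹ • ∑ i ∈ Finset.Icc 1 M, w n (i+1))
    (hy_bdd : ∀ i ∈ Finset.Icc 1 M, ∃ C, ∀ n ≥ 1, ‖y n i‖ ≤ C)
    : (∀ i ∈ Finset.Icc 1 M, ∃ C, ∀ n ≥ 1, ‖T i (y n i)‖ ≤ C) ∧
      (∃ C, ∀ n ≥ 1, ‖x n‖ ≤ C) ∧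
      (∀ i ∈ Finset.Icc 1 M, ∃ C, ∀ n ≥ 1, ‖w n (i+1)‖ ≤ C) ∧
      (∃ C, ∀ n ≥ 1, ‖z n‖ ≤ C) ∧
      (∀ i ∈ Finset.Icc 1 M, ∃ C, ∀ n ≥ 1, ‖d n i‖ ≤ C) := by
  obtain ⟨p, hp⟩ := hS_ne
  have hpT : ∀ i ∈ Finset.Icc 1 M, T i p = p := by
    intro i hi
    rw [hS] at hp
    exact Set.mem_iInter₂.1 hp i hi
  have hTb : ∀ i ∈ Finset.Icc 1 M, ∃ C, ∀ n ≥ 1, ‖T i (y n i)‖ ≤ C := by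
    intro i hi
    obtain ⟨C, hC⟩ := hy_bdd i hi
    refine ⟨C + 2 * ‖p‖, fun n hn => ?_⟩
    have h1 := hT_firm i hi (y n i) p
    have h2 := real_inner_le_norm (T i (y n i) - T i p) (y n i - p)
    rw [hpT i hi] at h1 h2
    have h3 : ‖T i (y n i) - p‖ ≤ ‖y n i - p‖ := by
      by_contra hcon
      push Not at hcon
      nlinarith [norm_nonneg (y n i - p)]
    have h4 := norm_sub_le (y n i) p
    have h5 := norm_sub_norm_le (T i (y n i)) p
    have h6 := hC n hn
    linarith
  have hwb : ∀ i ∈ Finset.Icc 1 M, ∃ C, ∀ n ≥ 1, ‖w n (i+1)‖ ≤ C := by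
    intro i hi
    obtain ⟨C, hC⟩ := hTb i hi
    refine ⟨‖u i‖ + C, fun n hn => ?_⟩
    rw [hw n hn i hi]
    obtain ⟨ha0, ha1⟩ := hα_range n
    have h1 := norm_add_le (α n • u i) ((1 - α n) • T i (y n i))
    rw [norm_smul, norm_smul, Real.norm_of_nonneg ha0.le,
      Real.norm_of_nonneg (by linarith : (0:ℝ) ≤ 1 - α n)] at h1
    have h2 : α n * ‖u i‖ ≤ ‖u i‖ := mul_le_of_le_one_left (norm_nonneg _) ha1
    have h3 : (1 - α n) * ‖T i (y n i)‖ ≤ ‖T i (y n i)‖ :=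
      mul_le_of_le_one_left (norm_nonneg _) (by linarith)
    have h4 := hC n hn
    linarith
  have hxb0 : ∃ C, ∀ n, ‖x n‖ ≤ C := by
    choose! C hC using hwb
    refine ⟨‖x 0‖ + ‖x 1‖ + |(M:ℝ)⁻¹ * ∑ i ∈ Finset.Icc 1 M, C i|, fun n => ?_⟩
    have e0 := norm_nonneg (x 0)
    have e1 := norm_nonneg (x 1)
    have e2 := abs_nonneg ((M:ℝ)⁻¹ * ∑ i ∈ Finset.Icc 1 M, C i)
    rcases n with _ | _ | n
    · linarith
    · simp only [zero_add]; linarith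
    · have h1 : ‖x (n+1+1)‖ ≤ (M:ℝ)⁻¹ * ∑ i ∈ Finset.Icc 1 M, C i := by
        rw [hx (n+1) (by omega), norm_smul, Real.norm_of_nonneg (by positivity)]
        exact mul_le_mul_of_nonneg_left
          (norm_sum_le_of_le _ fun i hi => hC i hi (n+1) (by omega)) (by positivity)
      have h2 := le_abs_self ((M:ℝ)⁻¹ * ∑ i ∈ Finset.Icc 1 M, C i)
      linarith
  obtain ⟨X, hX⟩ := hxb0
  have hzb : ∀ n ≥ 1, ‖z n‖ ≤ 3 * X := by
    intro n hn
    rw [hz n hn]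
    obtain ⟨t0, t1⟩ := hθ_range n
    have h1 := norm_add_le (x n) (θ n • (x n - x (n-1)))
    rw [norm_smul, Real.norm_of_nonneg t0] at h1
    have h2 : θ n * ‖x n - x (n-1)‖ ≤ ‖x n - x (n-1)‖ :=
      mul_le_of_le_one_left (norm_nonneg _) t1.le
    have h3 := norm_sub_le (x n) (x (n-1))
    have h4 := hX n
    have h5 := hX (n-1)
    linarith
  refine ⟨hTb, ⟨X, fun n _ => hX n⟩, hwb, ⟨3 * X, hzb⟩, ?_⟩
  intro i hi
  have hX0 : 0 ≤ X := (norm_nonneg _).trans (hX 0)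
  have hLi := hL_pos i hi
  refine bdd_aux (fun n => ‖d n i‖) β (‖h' i 0‖ + (1 / L i) * (3 * X)) (by positivity)
    (fun n => norm_nonneg _) hβ_lim ?_
  intro n hn
  have h1 := norm_add_le (-(h' i (z n))) (β n • d n i)
  rw [norm_neg, norm_smul, Real.norm_of_nonneg (hβ_range n).1.le, ← hd n hn i hi] at h1
  have h2 := hh_lip i hi (z n) 0
  rw [sub_zero] at h2
  have h3 := norm_sub_norm_le (h' i (z n)) (h' i 0)
  have h4 : (1 / L i) * ‖z n‖ ≤ (1 / L i) * (3 * X) :=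
    mul_le_mul_of_nonneg_left (hzb n hn) (by positivity)
  show ‖d (n+1) i‖ ≤ ‖h' i 0‖ + (1 / L i) * (3 * X) + β n * ‖d n i‖
  linarith
end
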